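/- arXiv:1909.01972 — 4 statements merged into one kernel-verified Lean document; each statement's English description precedes it below -/
import Mathlib

section
/- For all n ≥ 1 and all vertices x, y of G_n, the zero-average Green function satisfies G_{G_n}(x,y) ≤ (16/7)·((d−1)/(d−2))·(1/(d−1))^{d_{G_n}(x,y)} + 2·ln(N_n)·N_n^{−c_0/β} + 1/(β·N_n^{c_0}), where d_{G_n} is the graph distance on G_n. -/
open MeasureTheory ProbabilityTheory Filter Set
open scoped ENNReal NNReal ENat Classical

namespace GFF

variable {V : Type*} {T : Type*}

/-- Number of ordered adjacent pairs inside `U` (twice the number of edges of the induced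
subgraph). -/
noncomputable def adjPairs (G : SimpleGraph V) (U : Set V) : ℕ :=
  Set.ncard {p : V × V | p.1 ∈ U ∧ p.2 ∈ U ∧ G.Adj p.1 p.2}

/-- `U` (assumed connected) induces a tree, i.e. has tree excess zero. -/
def TxZero (G : SimpleGraph V) (U : Set V) : Prop :=
  adjPairs G U = 2 * (Set.ncard U - 1)

/-- Closed ball of radius `R` for the graph distance. -/
def gball (G : SimpleGraph V) (x : V) (R : ℕ) : Set V := {y | G.dist x y ≤ R}

/-- Set of vertices within distance `R` of the set `A`. -/
def sball (G : SimpleGraph V) (A : Set V) (R : ℕ) : Set V := {y | ∃ a ∈ A, G.dist a y ≤ R}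

/-- Connected component containing `x` of the level set `{ω ≥ h}`. -/
def levelComp (G : SimpleGraph V) (h : ℝ) (ω : V → ℝ) (x : V) : Set V :=
  {y | ∃ p : G.Walk x y, ∀ v ∈ p.support, h ≤ ω v}

/-- `G` is `d`-regular. -/
def IsReg (G : SimpleGraph V) (d : ℕ) : Prop := ∀ v, Nat.card (G.neighborSet v) = d

/-- `G` is an infinite `d`-regular tree. -/
def IsRegTree (G : SimpleGraph V) (d : ℕ) : Prop :=
  G.Connected ∧ G.IsAcyclic ∧ IsReg G d

/-- Transition matrix of SRW on a `d`-regular graph. -/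
noncomputable def transP [Fintype V] (G : SimpleGraph V) (d : ℕ) : Matrix V V ℝ :=
  Matrix.of fun u v => if G.Adj u v then ((d : ℝ))⁻¹ else 0

/-- All non-zero eigenvalues of `I - P` are at least `β`. -/
def SpectralGapLB [Fintype V] (G : SimpleGraph V) (d : ℕ) (β : ℝ) : Prop :=
  ∀ (f : V → ℝ) (lam : ℝ),
    Matrix.mulVec ((1 : Matrix V V ℝ) - transP G d) f = lam • f → f ≠ 0 → lam = 0 ∨ β ≤ lam

/-- `P_x[X̄_t = y]` for the continuous-time SRW with i.i.d. mean-one exponential holding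
times (Poissonized jump chain). -/
noncomputable def heatK [Fintype V] (G : SimpleGraph V) (d : ℕ) (t : ℝ) (x y : V) : ℝ :=
  ∑' k : ℕ, Real.exp (-t) * t ^ k / (Nat.factorial k) * ((transP G d) ^ k) x y

/-- The zero-average Green function. -/
noncomputable def zGreen [Fintype V] (G : SimpleGraph V) (d Nn : ℕ) (x y : V) : ℝ :=
  ∫ t in Set.Ioi (0 : ℝ), (heatK G d t x y - 1 / (Nn : ℝ))

/-- Green function of SRW on the `d`-regular tree. -/
noncomputable def treeGreen (G : SimpleGraph V) (d : ℕ) (x y : V) : ℝ :=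
  (((d : ℝ) - 1) / ((d : ℝ) - 2)) * (((d : ℝ) - 1)⁻¹) ^ (G.dist x y)

/-- `μ` is the law of the centred Gaussian field with covariance `K`. -/
def IsGaussianField {I : Type*} (μ : Measure (I → ℝ)) (K : I → I → ℝ) : Prop :=
  IsProbabilityMeasure μ ∧
    ∀ c : I →₀ ℝ,
      μ.map (fun ω => ∑ i ∈ c.support, c i * ω i) =
        gaussianReal 0 (Real.toNNReal (∑ i ∈ c.support, ∑ j ∈ c.support, c i * c j * K i j))

/-- One-step transition probability of SRW. -/
noncomputable def srwStep (G : SimpleGraph V) (d : ℕ) (u v : V) : ℝ≥0∞ :=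
  if G.Adj u v then (d : ℝ≥0∞)⁻¹ else 0

/-- `W x` is the law of discrete-time SRW on `G` started at `x`. -/
def IsSRW [MeasurableSpace V] (G : SimpleGraph V) (d : ℕ) (W : V → Measure (ℕ → V)) : Prop :=
  (∀ x, IsProbabilityMeasure (W x)) ∧
    ∀ (x : V) (k : ℕ) (p : ℕ → V),
      W x {ω | ∀ i ≤ k, ω i = p i} =
        (if p 0 = x then 1 else 0) * ∏ i ∈ Finset.range k, srwStep G d (p i) (p (i + 1))

/-- Entrance time of the set `A` (`⊤` if never entered). -/
noncomputable def hitTime (A : Set V) (ω : ℕ → V) : ℕ∞ :=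
  sInf ((Nat.cast : ℕ → ℕ∞) '' {k | ω k ∈ A})

/-- Exit time of the set `U`. -/
noncomputable def exitTime (U : Set V) (ω : ℕ → V) : ℕ∞ := hitTime Uᶜ ω

/-- Position of the walk at the entrance time of `A`. -/
noncomputable def stopAt (A : Set V) (ω : ℕ → V) : V := ω (hitTime A ω).toNat

/-- `π` is a cover tree of `G` at `x`. -/
def IsCoverMap (Gt : SimpleGraph T) (G : SimpleGraph V) (o : T) (x : V) (π : T → V) : Prop :=
  π o = x ∧ Function.Surjective π ∧ ∀ y : T, π '' (Gt.neighborSet y) = G.neighborSet (π y)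

/-- `T_d^+`: the vertices of the tree whose geodesic to `o` avoids the fixed neighbour
`obar` of `o`. -/
def treePlus (Gt : SimpleGraph T) (o obar : T) : Set T :=
  {z | Gt.dist z obar = Gt.dist z o + 1}

/-- `S^+_{T_d}(o,R)`. -/
def spherePlus (Gt : SimpleGraph T) (o obar : T) (R : ℕ) : Set T :=
  {z | z ∈ treePlus Gt o obar ∧ Gt.dist o z = R}

/-- The critical value for level-set percolation on the tree (w.r.t. the law `μT`). -/
noncomputable def hstar (Gt : SimpleGraph T) (o : T) (μT : Measure (T → ℝ)) : ℝ :=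
  sInf {h : ℝ | μT {ω | (levelComp Gt h ω o).Infinite} = 0}

/-- The forward percolation probability `η⁺(h)`. -/
noncomputable def etaPlus (Gt : SimpleGraph T) (o obar : T) (μT : Measure (T → ℝ)) (h : ℝ) :
    ℝ :=
  (μT {ω | (levelComp Gt h ω o ∩ treePlus Gt o obar).Infinite}).toReal

/-- `s_n`. -/
noncomputable def sn (d Nn : ℕ) : ℕ :=
  max 1 ⌊(8 : ℝ) * Real.logb ((d : ℝ) - 1) (Real.logb ((d : ℝ) - 1) (Nn : ℝ))⌋₊

/-- `c₀ = αβ/(d-1)`. -/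
noncomputable def c0 (d : ℕ) (α β : ℝ) : ℝ := α * β / ((d : ℝ) - 1)

/-- `r_n`. -/
noncomputable def rn (d : ℕ) (α β : ℝ) (Nn : ℕ) : ℕ :=
  max 1 ⌊(c0 d α β / 18) * Real.logb ((d : ℝ) - 1) (Nn : ℝ)⌋₊

/-- `R_n`. -/
noncomputable def Rn (d : ℕ) (α β : ℝ) (Nn : ℕ) : ℕ :=
  max 1 ⌊(c0 d α β / 6) * Real.logb ((d : ℝ) - 1) (Nn : ℝ)⌋₊

/-- `F_A(x,s)`: the vertices of `B(A,s) ∖ A` connected to `x` within `B(A,s) ∖ A`. -/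
def Fset (G : SimpleGraph V) (A : Set V) (s : ℕ) (x : V) : Set V :=
  {z | ∃ p : G.Walk x z, ∀ v ∈ p.support, v ∈ sball G A s ∧ v ∉ A}

/-- Good vertex at the boundary of `A`. -/
def GoodVertex (G : SimpleGraph V) (A : Set V) (s : ℕ) (x : V) : Prop :=
  x ∉ A ∧ (∃! y, y ∈ A ∧ G.Adj x y) ∧
    TxZero G (Fset G A s x) ∧
    ∀ y : V, y ∉ A → (∃ a ∈ A, G.Adj y a) → y ≠ x →
      ∀ p : G.Walk y x, (∀ v ∈ p.support, v ∉ A) → ∃ v ∈ p.support, v ∉ sball G A s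

end GFF

namespace GUB
open SimpleGraph

lemma tree_adj_dist {W : Type*} {T : SimpleGraph W} (hT : T.IsTree) (a : W) {z w : W}
    (h : T.Adj z w) : T.dist a w = T.dist a z + 1 ∨ T.dist a w + 1 = T.dist a z := by
  obtain ⟨p, hp, hpl⟩ := hT.connected.exists_path_of_dist a z
  obtain ⟨q, hq, hql⟩ := hT.connected.exists_path_of_dist a w
  by_cases hz : z ∈ q.support
  · left
    have := hT.isAcyclic.path_concat hp hq h hz
    rw [← hpl, ← hql, this, Walk.length_concat]
  · right
    have hw := hT.isAcyclic.mem_support_of_ne_mem_support_of_adj_of_isPath hp hq h hz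
    have := hT.isAcyclic.path_concat hq hp h.symm hw
    rw [← hpl, ← hql, this, Walk.length_concat]

lemma tree_closer_unique {W : Type*} {T : SimpleGraph W} (hT : T.IsTree) (a : W) {z w w' : W}
    (h : T.Adj z w) (h' : T.Adj z w') (hd : T.dist a w + 1 = T.dist a z)
    (hd' : T.dist a w' + 1 = T.dist a z) : w = w' := by
  obtain ⟨p, hp, hpl⟩ := hT.connected.exists_path_of_dist a z
  have key : ∀ v, T.Adj z v → T.dist a v + 1 = T.dist a z → v = p.penultimate := by
    intro v hv hdv
    obtain ⟨q, hq, hql⟩ := hT.connected.exists_path_of_dist a v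
    have hz : z ∉ q.support := by
      intro hz
      have := hT.isAcyclic.path_concat hp hq hv hz
      rw [this, Walk.length_concat] at hql
      omega
    have hw := hT.isAcyclic.mem_support_of_ne_mem_support_of_adj_of_isPath hp hq hv hz
    exact hT.isAcyclic.eq_penultimate_of_adj_end hp hv hw
  rw [key w h hd, key w' h' hd']

lemma tree_exists_closer {W : Type*} {T : SimpleGraph W} (hT : T.IsTree) {a z : W}
    (h : z ≠ a) : ∃ w, T.Adj z w ∧ T.dist a w + 1 = T.dist a z := by
  obtain ⟨p, hpl⟩ := hT.connected.exists_walk_length_eq_dist z a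
  cases p with
  | nil => exact absurd rfl h
  | @cons _ w _ hadj q =>
    refine ⟨w, hadj, ?_⟩
    have h1 := dist_le q
    rw [Walk.length_cons] at hpl
    have := tree_adj_dist hT a hadj
    rw [dist_comm (u := w)] at h1
    rw [dist_comm (u := z)] at hpl
    omega

lemma tree_three {W : Type*} {T : SimpleGraph W} (hT : T.IsTree) (u v : W) :
    ∀ (k : ℕ) (x x' : W), T.dist v x = k → T.Adj x x' → T.dist u x' + 1 = T.dist u x →
      T.dist v x' = T.dist v x + 1 → T.dist u v = T.dist u x + T.dist v x := by
  intro k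
  induction k with
  | zero =>
    intro x x' hk _ _ _
    have := (hT.connected.dist_eq_zero_iff).1 hk
    subst this; simp
  | succ k ih =>
    intro x x' hk hadj h1 h2
    have hne : x ≠ v := by rintro rfl; simp at hk
    obtain ⟨w, hw, hwd⟩ := tree_exists_closer hT hne
    have hu : T.dist u w = T.dist u x + 1 := by
      rcases tree_adj_dist hT u hw with h | h
      · exact h
      · have := tree_closer_unique hT u hadj hw h1 h
        subst this; omega
    have := ih w x (by omega) hw.symm (by omega) (by omega)
    omega

lemma tree_four {W : Type*} {T : SimpleGraph W} (hT : T.IsTree) (u v y : W) :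
    ∀ (k : ℕ) (x : W), T.dist u x = k →
      T.dist y x + T.dist u v ≤ T.dist u x + T.dist v y ∨
      T.dist y x + T.dist u v ≤ T.dist v x + T.dist u y := by
  intro k
  induction k with
  | zero =>
    intro x hk
    have := (hT.connected.dist_eq_zero_iff).1 hk
    subst this
    right
    rw [dist_comm (u := v) (v := u), dist_comm (u := u) (v := y)]; omega
  | succ k ih =>
    intro x hk
    have hne : x ≠ u := by rintro rfl; simp at hk
    obtain ⟨w, hw, hwd⟩ := tree_exists_closer hT hne
    have tri := hT.connected.dist_triangle (u := u) (v := x) (w := v)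
    rw [dist_comm (u := x) (v := v)] at tri
    rcases tree_adj_dist hT y hw with h | h
    · have := tree_three hT u y _ x w rfl hw hwd h
      right; omega
    · rcases tree_adj_dist hT v hw with h' | h'
      · have := tree_three hT y v _ x w rfl hw h h'
        left; rw [dist_comm (u := v) (v := y)]; omega
      · have := ih w (by omega)
        omega

/-- action of the adjacency operator of a tree on radial exponentials -/
lemma tree_sum {W : Type*} [Fintype W] {T : SimpleGraph W} (hT : T.IsTree) (a z : W)
    (q : ℝ) (hq : q ≠ 0) :
    ∑ w, (if T.Adj z w then q ^ T.dist a w else 0) =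
      (1 / q + ((∑ w, if T.Adj z w then (1:ℝ) else 0) - 1) * q) * q ^ T.dist a z
        - (if z = a then 1 / q - q else 0) := by
  by_cases h : z = a
  · subst h
    simp only [if_true, dist_self, pow_zero]
    have : ∀ w, (if T.Adj z w then q ^ T.dist z w else 0) = (if T.Adj z w then (1:ℝ) else 0) * q := by
      intro w
      split_ifs with hw
      · rw [dist_eq_one_iff_adj.2 hw]; simp
      · simp
    simp only [this, ← Finset.sum_mul]
    ring
  · simp only [if_neg h]
    obtain ⟨w0, hw0, hd0⟩ := tree_exists_closer hT h
    have : ∀ w, (if T.Adj z w then q ^ T.dist a w else 0) =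
        (if T.Adj z w then (1:ℝ) else 0) * (q * q ^ T.dist a z) +
        (if w = w0 then (1 / q - q) * q ^ T.dist a z else 0) := by
      intro w
      by_cases hw : T.Adj z w
      · by_cases hww : w = w0
        · subst hww
          simp only [hw, if_true]
          rw [← hd0, pow_succ]; field_simp; ring
        · rcases tree_adj_dist hT a hw with h1 | h1
          · simp [hw, hww, h1, pow_succ]; ring
          · exact absurd (tree_closer_unique hT a hw hw0 h1 hd0) hww
      · have : w ≠ w0 := by rintro rfl; exact hw hw0
        simp [hw, this]
    simp only [this, Finset.sum_add_distrib, ← Finset.sum_mul]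
    simp
    ring

end GUB

namespace GUB
open SimpleGraph

lemma super_tree {W : Type*} [Fintype W] {T : SimpleGraph W} (hT : T.IsTree) (d : ℕ) (hd : 3 ≤ d)
    (hdeg : ∀ z, (∑ w, if T.Adj z w then (1:ℝ) else 0) ≤ d) (x : W) :
    ∃ f : W → ℝ, (∀ z, 0 ≤ f z) ∧
      (∀ z, (if z = x then (1:ℝ) else 0) + (d:ℝ)⁻¹ * ∑ w, (if T.Adj z w then f w else 0) ≤ f z) ∧
      ∀ z, f z ≤ 16 / 7 * (((d : ℝ) - 1) / ((d : ℝ) - 2)) * (((d : ℝ) - 1)⁻¹) ^ T.dist x z := by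
  have hd' : (3:ℝ) ≤ d := by exact_mod_cast hd
  have h1 : (0:ℝ) < (d:ℝ) - 1 := by linarith
  have h2 : (0:ℝ) < (d:ℝ) - 2 := by linarith
  have hg : 0 < ((d : ℝ) - 1) / ((d : ℝ) - 2) := by positivity
  have hq : 0 < ((d:ℝ) - 1)⁻¹ := by positivity
  refine ⟨fun z => ((d : ℝ) - 1) / ((d : ℝ) - 2) * (((d : ℝ) - 1)⁻¹) ^ T.dist x z,
    fun z => by positivity, fun z => ?_, fun z => ?_⟩
  · have hs := tree_sum hT x z _ hq.ne'
    have e1 : ∑ w, (if T.Adj z w then ((d : ℝ) - 1) / ((d : ℝ) - 2) * (((d : ℝ) - 1)⁻¹) ^ T.dist x w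
        else 0) = ((d : ℝ) - 1) / ((d : ℝ) - 2) *
        ∑ w, (if T.Adj z w then (((d : ℝ) - 1)⁻¹) ^ T.dist x w else 0) := by
      rw [Finset.mul_sum]; exact Finset.sum_congr rfl fun w _ => by split_ifs <;> simp
    rw [e1, hs]
    have hD := hdeg z
    set D := ∑ w, if T.Adj z w then (1:ℝ) else 0
    set t := (((d : ℝ) - 1)⁻¹) ^ T.dist x z
    have ht : 0 < t := by positivity
    have hkey : (1 / ((d:ℝ) - 1)⁻¹ + (D - 1) * ((d:ℝ) - 1)⁻¹) ≤ d := by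
      have : (1 / ((d:ℝ) - 1)⁻¹ + (D - 1) * ((d:ℝ) - 1)⁻¹) = (d - 1) + (D - 1) / (d - 1) := by
        field_simp
      rw [this]
      have : (D - 1) / ((d:ℝ) - 1) ≤ 1 := by rw [div_le_one h1]; linarith
      linarith
    have h3 := mul_le_mul_of_nonneg_right hkey ht.le
    have h4 : (d:ℝ)⁻¹ * (((d : ℝ) - 1) / ((d : ℝ) - 2) * ((1 / ((d:ℝ) - 1)⁻¹ + (D - 1) * ((d:ℝ) - 1)⁻¹) * t -
        (if z = x then 1 / ((d:ℝ) - 1)⁻¹ - ((d:ℝ) - 1)⁻¹ else 0))) ≤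
        (d:ℝ)⁻¹ * (((d : ℝ) - 1) / ((d : ℝ) - 2) * (d * t -
        (if z = x then 1 / ((d:ℝ) - 1)⁻¹ - ((d:ℝ) - 1)⁻¹ else 0))) := by
      gcongr
    refine (add_le_add_right h4 _).trans (le_of_eq ?_)
    split_ifs
    · field_simp; ring
    · field_simp; ring
  · have : 0 < ((d : ℝ) - 1) / ((d : ℝ) - 2) * (((d : ℝ) - 1)⁻¹) ^ T.dist x z := by positivity
    linarith

lemma super_uni {W : Type*} [Fintype W] {H : SimpleGraph W} {u v : W} (huv : H.Adj u v)
    (hT : (H.deleteEdges {s(u, v)}).IsTree) (d : ℕ) (hd : 3 ≤ d)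
    (hdeg : ∀ z, (∑ w, if H.Adj z w then (1:ℝ) else 0) ≤ d) (x : W) :
    ∃ f : W → ℝ, (∀ z, 0 ≤ f z) ∧
      (∀ z, (if z = x then (1:ℝ) else 0) + (d:ℝ)⁻¹ * ∑ w, (if H.Adj z w then f w else 0) ≤ f z) ∧
      ∀ z, f z ≤ 16 / 7 * (((d : ℝ) - 1) / ((d : ℝ) - 2)) * (((d : ℝ) - 1)⁻¹) ^ H.dist x z := by
  have hd' : (3:ℝ) ≤ d := by exact_mod_cast hd
  have h1 : (0:ℝ) < (d:ℝ) - 1 := by linarith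
  have h2 : (0:ℝ) < (d:ℝ) - 2 := by linarith
  obtain ⟨g, hgdef⟩ : ∃ g, g = ((d : ℝ) - 1) / ((d : ℝ) - 2) := ⟨_, rfl⟩
  obtain ⟨q, hqdef⟩ : ∃ q, q = ((d:ℝ) - 1)⁻¹ := ⟨_, rfl⟩
  have hg : 0 < g := by rw [hgdef]; positivity
  have hq : 0 < q := by rw [hqdef]; positivity
  have hq2 : q ≤ 1 / 2 := by
    rw [hqdef, inv_le_comm₀ h1 (by norm_num)]; linarith
  have hqd : 1 / q = d - 1 := by rw [hqdef]; simp
  have hdq : (d:ℝ) = 1 / q + 1 := by linarith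
  have hne : u ≠ v := huv.ne
  rw [← hgdef, ← hqdef]
  obtain ⟨T, hTdef⟩ : ∃ T, T = H.deleteEdges {s(u, v)} := ⟨_, rfl⟩
  rw [← hTdef] at hT
  have hTadj : ∀ a b, T.Adj a b ↔ H.Adj a b ∧ ¬ (a = u ∧ b = v ∨ a = v ∧ b = u) := by
    intro a b; rw [hTdef, deleteEdges_adj]; simp
  have hnadj : ¬ T.Adj u v := by rw [hTadj]; simp
  have hl := hT.connected.one_lt_dist_of_ne_of_not_adj hne hnadj
  have hTH : T ≤ H := fun a b h => ((hTadj a b).1 h).1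
  have hdist : ∀ a b, H.dist a b ≤ T.dist a b := fun a b =>
    Reachable.dist_anti hTH (hT.connected a b)
  have hHc : H.Connected := hT.connected.mono hTH
  obtain ⟨Q, hQ⟩ : ∃ Q, Q = q ^ (T.dist u v + 1) := ⟨_, rfl⟩
  have hQ0 : 0 < Q := by rw [hQ]; positivity
  have hQ8 : Q ≤ 1 / 8 := by
    rw [hQ]
    calc q ^ (T.dist u v + 1) ≤ q ^ 3 := pow_le_pow_of_le_one hq.le (by linarith) (by omega)
      _ ≤ (1/2)^3 := by gcongr
      _ = 1 / 8 := by norm_num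
  obtain ⟨c, hc⟩ : ∃ c, c = 1 / (1 - Q) := ⟨_, rfl⟩
  have hc0 : 0 < c := by rw [hc]; apply one_div_pos.2; linarith
  have hcQ : c * (1 - Q) = 1 := by rw [hc]; field_simp [show (1 - Q) ≠ 0 by linarith]
  have hc8 : c ≤ 8 / 7 := by nlinarith
  have hfpos : ∀ z, 0 ≤ g * (q ^ T.dist x z + c * (q ^ (T.dist x u + 1) * q ^ T.dist v z +
        q ^ (T.dist x v + 1) * q ^ T.dist u z)) := fun z => by positivity
  refine ⟨fun z => g * (q ^ T.dist x z + c * (q ^ (T.dist x u + 1) * q ^ T.dist v z +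
        q ^ (T.dist x v + 1) * q ^ T.dist u z)), hfpos, fun z => ?_, fun z => ?_⟩
  · obtain ⟨f, hf⟩ : ∃ f : W → ℝ, f = fun z => (q ^ T.dist x z + c * (q ^ (T.dist x u + 1) * q ^ T.dist v z +
        q ^ (T.dist x v + 1) * q ^ T.dist u z)) := ⟨_, rfl⟩
    have hfz : ∀ z, (q ^ T.dist x z + c * (q ^ (T.dist x u + 1) * q ^ T.dist v z +
        q ^ (T.dist x v + 1) * q ^ T.dist u z)) = f z := fun z => by rw [hf]
    simp only [hfz]
    have hf0 : ∀ z, 0 < f z := fun z => by rw [← hfz]; positivity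
    -- splitting sums
    have split : ∀ F : W → ℝ, ∑ w, (if H.Adj z w then F w else 0) =
        ∑ w, (if T.Adj z w then F w else 0) + (if z = u then F v else 0) + (if z = v then F u else 0) := by
      intro F
      have : ∀ w, (if H.Adj z w then F w else 0) = (if T.Adj z w then F w else 0)
          + (if w = v then (if z = u then F v else 0) else 0)
          + (if w = u then (if z = v then F u else 0) else 0) := by
        intro w
        rw [if_congr (hTadj z w) rfl rfl]
        by_cases hzu : z = u
        · subst hzu
          by_cases hw : w = v
          · subst hw; simp [huv, hne]
          · simp [hw, hne]
        · by_cases hzv : z = v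
          · subst hzv
            by_cases hw : w = u
            · subst hw; simp [huv.symm, hne.symm]
            · simp [hw, hne.symm]
          · simp [hzu, hzv]
      simp only [this, Finset.sum_add_distrib]
      simp
    have e1 : ∑ w, (if H.Adj z w then g * f w else 0) = g * ∑ w, (if H.Adj z w then f w else 0) := by
      rw [Finset.mul_sum]; exact Finset.sum_congr rfl fun w _ => by split_ifs <;> simp
    obtain ⟨D, hD⟩ : ∃ D, D = ∑ w, (if T.Adj z w then (1:ℝ) else 0) := ⟨_, rfl⟩
    have hDd := hdeg z
    rw [split (fun _ => 1), ← hD] at hDd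
    have e2 : ∑ w, (if T.Adj z w then f w else 0) = (1 / q + (D - 1) * q) * f z
        - (1 / q - q) * ((if z = x then 1 else 0) + c * (q ^ (T.dist x u + 1) * (if z = v then 1 else 0) +
        q ^ (T.dist x v + 1) * (if z = u then 1 else 0))) := by
      have : ∀ w, (if T.Adj z w then f w else 0) = (if T.Adj z w then q ^ T.dist x w else 0)
          + c * q ^ (T.dist x u + 1) * (if T.Adj z w then q ^ T.dist v w else 0)
          + c * q ^ (T.dist x v + 1) * (if T.Adj z w then q ^ T.dist u w else 0) := by
        intro w; split_ifs
        · rw [← hfz]; ring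
        · simp
      simp only [this, Finset.sum_add_distrib, ← Finset.mul_sum, tree_sum hT _ z q hq.ne', ← hD]
      rw [← hfz]
      split_ifs <;> ring
    rw [e1, split f, e2]
    have hfv : f v = c * (q ^ T.dist x v + q ^ (T.dist x u + 1)) := by
      rw [← hfz, dist_self, pow_zero]
      have : q ^ (T.dist x v + 1) * q ^ T.dist u v = q ^ T.dist x v * Q := by rw [hQ]; ring
      rw [this]
      linear_combination (-q ^ T.dist x v) * hcQ
    have hfu : f u = c * (q ^ T.dist x u + q ^ (T.dist x v + 1)) := by
      rw [← hfz, dist_self, pow_zero, dist_comm (u := v) (v := u)]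
      have : q ^ (T.dist x u + 1) * q ^ T.dist u v = q ^ T.dist x u * Q := by rw [hQ]; ring
      rw [this]
      linear_combination (-q ^ T.dist x u) * hcQ
    have hgd : g * (1 / q - q) = d := by
      rw [hgdef, hqd, hqdef]; field_simp; ring
    have hd0 : (0:ℝ) < d := by linarith
    -- main inequality
    have main : ((1 / q + (D - 1) * q) * f z
        - (1 / q - q) * ((if z = x then 1 else 0) + c * (q ^ (T.dist x u + 1) * (if z = v then 1 else 0) +
        q ^ (T.dist x v + 1) * (if z = u then 1 else 0))) + (if z = u then f v else 0) + (if z = v then f u else 0))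
        ≤ d * f z - (1 / q - q) * (if z = x then 1 else 0) := by
      have hqq : 1 / q * q = 1 := by field_simp
      by_cases hzu : z = u
      · subst hzu
        simp only [hne, if_true, if_false, add_zero, mul_zero, zero_add, mul_one] at hDd ⊢
        have k1 : (1 / q + (D - 1) * q) * f z ≤ (d - q) * f z := by
          apply mul_le_mul_of_nonneg_right _ (hf0 z).le
          have : (D - 1) * q ≤ (1/q - 1) * q := by
            apply mul_le_mul_of_nonneg_right _ hq.le; linarith
          rw [hdq]; linarith
        have k2 : f v - q * f z = (1 / q - q) * (c * q ^ (T.dist x v + 1)) := by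
          rw [hfv, hfu, pow_succ, pow_succ]; field_simp; ring
        nlinarith
      · by_cases hzv : z = v
        · subst hzv
          simp only [hne.symm, if_true, if_false, add_zero, mul_zero, mul_one] at hDd ⊢
          have k1 : (1 / q + (D - 1) * q) * f z ≤ (d - q) * f z := by
            apply mul_le_mul_of_nonneg_right _ (hf0 z).le
            have : (D - 1) * q ≤ (1/q - 1) * q := by
              apply mul_le_mul_of_nonneg_right _ hq.le; linarith
            rw [hdq]; linarith
          have k2 : f u - q * f z = (1 / q - q) * (c * q ^ (T.dist x u + 1)) := by
            rw [hfv, hfu, pow_succ, pow_succ]; field_simp; ring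
          nlinarith
        · simp only [hzu, hzv, if_false, add_zero, mul_zero] at hDd ⊢
          have k1 : (1 / q + (D - 1) * q) * f z ≤ d * f z := by
            apply mul_le_mul_of_nonneg_right _ (hf0 z).le
            have : (D - 1) * q ≤ (1/q) * q := by
              apply mul_le_mul_of_nonneg_right _ hq.le; linarith
            rw [hdq]; linarith
          linarith
    have := mul_le_mul_of_nonneg_left main (show 0 ≤ (d:ℝ)⁻¹ * g by positivity)
    have e3 : (d:ℝ)⁻¹ * g * (d * f z - (1 / q - q) * (if z = x then 1 else 0)) =
        g * f z - (if z = x then 1 else 0) := by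
      have : (d:ℝ)⁻¹ * d = 1 := by field_simp
      linear_combination (g * f z) * this - (d:ℝ)⁻¹ * (if z = x then 1 else 0) * hgd
        - (if z = x then 1 else 0) * this
    rw [e3, mul_assoc] at this
    linarith
  · -- final bound
    have hd1 : H.dist x z ≤ T.dist x z := hdist _ _
    have t1 : H.dist x z ≤ T.dist x u + 1 + T.dist v z := by
      have a := hHc.dist_triangle (u := x) (v := u) (w := z)
      have b := hHc.dist_triangle (u := u) (v := v) (w := z)
      have := dist_eq_one_iff_adj.2 huv
      have := hdist x u
      have := hdist v z
      omega
    have t2 : H.dist x z ≤ T.dist x v + 1 + T.dist u z := by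
      have a := hHc.dist_triangle (u := x) (v := v) (w := z)
      have b := hHc.dist_triangle (u := v) (v := u) (w := z)
      have := dist_eq_one_iff_adj.2 huv.symm
      have := hdist x v
      have := hdist u z
      omega
    have hq1 : q ≤ 1 := by linarith
    have mono : ∀ {m n : ℕ}, m ≤ n → q ^ n ≤ q ^ m := fun h => pow_le_pow_of_le_one hq.le hq1 h
    beta_reduce
    rw [← pow_add, ← pow_add]
    have key : q ^ T.dist x z + c * (q ^ (T.dist x u + 1 + T.dist v z) + q ^ (T.dist x v + 1 + T.dist u z))
        ≤ 2 * c * q ^ H.dist x z := by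
      have b0 := mono hd1
      have b1 := mono t1
      have b2 := mono t2
      have fin : ∀ X Y : ℝ, X ≤ q ^ T.dist x z * Q → Y ≤ q ^ H.dist x z →
          q ^ T.dist x z + c * (X + Y) ≤ 2 * c * q ^ H.dist x z := by
        intro X Y hX hY
        have := mul_le_mul_of_nonneg_left hX hc0.le
        have := mul_le_mul_of_nonneg_left hY hc0.le
        have := mul_le_mul_of_nonneg_left b0 hc0.le
        have : q ^ T.dist x z = c * q ^ T.dist x z - c * (q ^ T.dist x z * Q) := by
          linear_combination (-q ^ T.dist x z) * hcQ
        linarith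
      rcases tree_four hT u v z _ x rfl with h | h
      · apply fin _ _ _ b2
        rw [hQ, ← pow_add]
        apply mono
        rw [dist_comm (u := x) (v := z), dist_comm (u := x) (v := u)]; omega
      · rw [add_comm (q ^ (T.dist x u + 1 + T.dist v z))]
        apply fin _ _ _ b1
        rw [hQ, ← pow_add]
        apply mono
        rw [dist_comm (u := x) (v := z), dist_comm (u := x) (v := v)]; omega
    calc _ ≤ g * (2 * c * q ^ H.dist x z) := mul_le_mul_of_nonneg_left key hg.le
      _ ≤ g * (2 * (8/7) * q ^ H.dist x z) := by gcongr
      _ = _ := by ring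

end GUB

namespace GUB
open SimpleGraph

lemma dichotomy {W : Type*} [Finite W] {H : SimpleGraph W} (hc : H.Connected)
    (hcard : Nat.card H.edgeSet ≤ Nat.card W) :
    H.IsTree ∨ ∃ u v, H.Adj u v ∧ (H.deleteEdges {s(u, v)}).IsTree := by
  by_cases hA : H.IsAcyclic
  · exact Or.inl ⟨hc, hA⟩
  · right
    rw [isAcyclic_iff_forall_adj_isBridge] at hA
    push Not at hA
    obtain ⟨u, v, huv, hb⟩ := hA
    have hc' := hc.connected_delete_edge_of_not_isBridge hb
    refine ⟨u, v, huv, isTree_iff_connected_and_card.2 ⟨hc', ?_⟩⟩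
    have h1 := hc'.card_vert_le_card_edgeSet_add_one
    have h2 : Nat.card (H.deleteEdges {s(u, v)}).edgeSet + 1 = Nat.card H.edgeSet := by
      rw [edgeSet_deleteEdges, Nat.card_coe_set_eq, Nat.card_coe_set_eq]
      exact Set.ncard_sdiff_singleton_add_one huv (Set.toFinite _)
    change Nat.card W ≤ Nat.card (H.deleteEdges {s(u, v)}).edgeSet + 1 at h1
    omega

lemma transP_pow_nonneg {V : Type*} [Fintype V] (G : SimpleGraph V) (d k : ℕ) (x y : V) :
    0 ≤ (GFF.transP G d ^ k) x y := by
  induction k generalizing y with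
  | zero => rw [pow_zero, Matrix.one_apply]; split_ifs <;> norm_num
  | succ k ih =>
    rw [pow_succ, Matrix.mul_apply]
    refine Finset.sum_nonneg fun w _ => mul_nonneg (ih w) ?_
    simp only [GFF.transP, Matrix.of_apply]; split_ifs <;> positivity

lemma transP_pow_zero {V : Type*} [Fintype V] (G : SimpleGraph V) (hG : G.Connected) (d k : ℕ) (x y : V)
    (h : k < G.dist x y) : (GFF.transP G d ^ k) x y = 0 := by
  induction k generalizing y with
  | zero =>
    rw [pow_zero, Matrix.one_apply, if_neg]
    rintro rfl; simp at h
  | succ k ih =>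
    rw [pow_succ, Matrix.mul_apply]
    refine Finset.sum_eq_zero fun w _ => ?_
    by_cases hw : G.Adj w y
    · rw [ih w, zero_mul]
      have := hG.dist_triangle (u := x) (v := w) (w := y)
      have := dist_eq_one_iff_adj.2 hw
      omega
    · simp [GFF.transP, hw]

lemma sum_adj {V : Type*} [Fintype V] {G : SimpleGraph V} {d : ℕ} (hreg : GFF.IsReg G d) (z : V) :
    (∑ w, if G.Adj z w then (1:ℝ) else 0) = d := by
  rw [← hreg z, Nat.card_eq_fintype_card, card_neighborSet_eq_degree, degree_eq_sum_if_adj]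

lemma transP_pow_sum {V : Type*} [Fintype V] {G : SimpleGraph V} {d : ℕ} (hd : 3 ≤ d)
    (hreg : GFF.IsReg G d) (k : ℕ) (x : V) :
    ∑ y, (GFF.transP G d ^ k) x y = 1 := by
  induction k with
  | zero => simp [Matrix.one_apply]
  | succ k ih =>
    simp only [pow_succ, Matrix.mul_apply]
    rw [Finset.sum_comm]
    rw [← ih]
    refine Finset.sum_congr rfl fun w _ => ?_
    rw [← Finset.mul_sum]
    have : ∑ i, GFF.transP G d w i = 1 := by
      have e : ∀ i, GFF.transP G d w i = (if G.Adj w i then (1:ℝ) else 0) * (d:ℝ)⁻¹ := by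
        intro i; simp [GFF.transP]
      simp only [e, ← Finset.sum_mul, sum_adj hreg]
      have : (d:ℝ) ≠ 0 := by positivity
      field_simp
    rw [this, mul_one]

lemma transP_pow_le_one {V : Type*} [Fintype V] {G : SimpleGraph V} {d : ℕ} (hd : 3 ≤ d)
    (hreg : GFF.IsReg G d) (k : ℕ) (x y : V) : (GFF.transP G d ^ k) x y ≤ 1 := by
  rw [← transP_pow_sum hd hreg k x]
  exact Finset.single_le_sum (f := fun y => (GFF.transP G d ^ k) x y)
    (fun w _ => transP_pow_nonneg G d k x w) (Finset.mem_univ y)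

lemma ball_connected {V : Type*} {G : SimpleGraph V} (hG : G.Connected) (x : V) (R : ℕ) :
    (G.induce (GFF.gball G x R)).Connected := by
  have hx : x ∈ GFF.gball G x R := by simp [GFF.gball]
  rw [connected_iff_exists_forall_reachable]
  refine ⟨⟨x, hx⟩, fun ⟨z, hz⟩ => ?_⟩
  obtain ⟨p, hp⟩ := hG.exists_walk_length_eq_dist x z
  have hs : ∀ w ∈ p.support, w ∈ GFF.gball G x R := by
    intro w hw
    have h1 := dist_le (p.takeUntil w hw)
    have h2 := p.length_takeUntil_le_length hw
    have h3 : G.dist x z ≤ R := hz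
    change G.dist x w ≤ R
    omega
  exact ⟨p.induce _ hs⟩

lemma dist_le_induce {V : Type*} {G : SimpleGraph V} (B : Set V) (hc : (G.induce B).Connected)
    (x y : B) : G.dist x y ≤ (G.induce B).dist x y := by
  obtain ⟨p, hp⟩ := hc.exists_walk_length_eq_dist x y
  have := dist_le (p.map (Embedding.induce (G := G) B).toHom)
  rw [Walk.length_map, hp] at this
  exact this

lemma adjPairs_edges {V : Type*} [Fintype V] {G : SimpleGraph V} (B : Set V) :
    2 * Nat.card (G.induce B).edgeSet ≤ GFF.adjPairs G B := by
  have h1 := (G.induce B).dart_card_eq_twice_card_edges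
  have h2 : Nat.card (G.induce B).edgeSet = (G.induce B).edgeFinset.card := by
    rw [Nat.card_eq_fintype_card, edgeFinset_card]
  rw [h2, ← h1, ← Nat.card_eq_fintype_card, GFF.adjPairs, ← Nat.card_coe_set_eq]
  refine Nat.card_le_card_of_injective
    (fun e : (G.induce B).Dart => ⟨(e.fst.1, e.snd.1), e.fst.2, e.snd.2, e.adj⟩) ?_
  intro e e' h
  simp only [Subtype.mk.injEq, Prod.mk.injEq] at h
  ext
  · exact h.1
  · exact h.2

lemma sum_pow_le {V : Type*} [Fintype V] {G : SimpleGraph V} (hG : G.Connected) {d : ℕ} (hd : 3 ≤ d)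
    (hreg : GFF.IsReg G d) (x y : V) (R : ℕ)
    (hcyc : GFF.adjPairs G (GFF.gball G x R) ≤ 2 * (GFF.gball G x R).ncard) :
    ∑ k ∈ Finset.range (R + 1), (GFF.transP G d ^ k) x y ≤
      16 / 7 * (((d : ℝ) - 1) / ((d : ℝ) - 2)) * (((d : ℝ) - 1)⁻¹) ^ (G.dist x y) := by
  have hd' : (3:ℝ) ≤ d := by exact_mod_cast hd
  have h1 : (0:ℝ) < (d:ℝ) - 1 := by linarith
  have h2 : (0:ℝ) < (d:ℝ) - 2 := by linarith
  have hx : x ∈ GFF.gball G x R := by simp [GFF.gball]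
  set B := GFF.gball G x R with hB
  have hc : (G.induce B).Connected := ball_connected hG x R
  have hE : Nat.card (G.induce B).edgeSet ≤ Nat.card B := by
    have := adjPairs_edges (G := G) B
    rw [Nat.card_coe_set_eq B]; omega
  have hdeg : ∀ z : B, (∑ w : B, if (G.induce B).Adj z w then (1:ℝ) else 0) ≤ d := by
    intro z
    rw [← sum_adj hreg z.1]
    have : (∑ w : B, if (G.induce B).Adj z w then (1:ℝ) else 0)
        = ∑ w ∈ Finset.univ.filter (· ∈ B), if G.Adj z w then (1:ℝ) else 0 := by
      rw [← Finset.sum_subtype_eq_sum_filter]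
      rw [Finset.subtype_univ]; rfl
    rw [this]
    apply Finset.sum_le_sum_of_subset_of_nonneg (Finset.filter_subset _ _)
    intro i _ _; split_ifs <;> norm_num
  have hex : ∃ f : B → ℝ, (∀ z, 0 ≤ f z) ∧
      (∀ z, (if z = ⟨x, hx⟩ then (1:ℝ) else 0) +
        (d:ℝ)⁻¹ * ∑ w, (if (G.induce B).Adj z w then f w else 0) ≤ f z) ∧
      ∀ z, f z ≤ 16 / 7 * (((d : ℝ) - 1) / ((d : ℝ) - 2)) *
        (((d : ℝ) - 1)⁻¹) ^ (G.induce B).dist ⟨x, hx⟩ z := by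
    rcases dichotomy hc hE with hT | ⟨u, v, huv, hT⟩
    · convert super_tree hT d hd hdeg ⟨x, hx⟩
    · convert super_uni huv hT d hd hdeg ⟨x, hx⟩
  obtain ⟨f, hf0, hfs, hfb⟩ := hex
  have hzero : ∀ z, z ∉ B → ∀ k, k ≤ R → (GFF.transP G d ^ k) x z = 0 := by
    intro z hz k hk
    apply transP_pow_zero G hG
    have : ¬ G.dist x z ≤ R := hz
    omega
  by_cases hy : y ∈ B
  swap
  · rw [Finset.sum_eq_zero]
    · positivity
    · intro k hk
      exact hzero y hy k (by simpa [Nat.lt_succ_iff] using hk)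
  have ind : ∀ j ≤ R, ∀ z : B, ∑ k ∈ Finset.range (j + 1), (GFF.transP G d ^ k) x z ≤ f z := by
    intro j
    induction j with
    | zero =>
      intro _ z
      refine le_trans ?_ (hfs z)
      have : 0 ≤ (d:ℝ)⁻¹ * ∑ w, (if (G.induce B).Adj z w then f w else 0) := by
        refine mul_nonneg (by positivity) (Finset.sum_nonneg fun w _ => ?_)
        split_ifs
        · exact hf0 w
        · exact le_rfl
      simp only [zero_add, Finset.range_one, Finset.sum_singleton, pow_zero, Matrix.one_apply]
      have e : (if x = (z:V) then (1:ℝ) else 0) = if z = ⟨x, hx⟩ then 1 else 0 := by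
        refine if_congr ?_ rfl rfl
        rw [Subtype.ext_iff]; exact eq_comm
      rw [e]; linarith
    | succ j ih =>
      intro hj z
      refine le_trans ?_ (hfs z)
      rw [Finset.sum_range_succ']
      have e : (GFF.transP G d ^ 0) x z = if z = ⟨x, hx⟩ then 1 else 0 := by
        rw [pow_zero, Matrix.one_apply]
        refine if_congr ?_ rfl rfl
        rw [Subtype.ext_iff]; exact eq_comm
      rw [e, add_comm]
      have e2 : ∑ k ∈ Finset.range (j + 1), (GFF.transP G d ^ (k + 1)) x z =
          (d:ℝ)⁻¹ * ∑ w : B, (if (G.induce B).Adj z w then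
            ∑ k ∈ Finset.range (j + 1), (GFF.transP G d ^ k) x w else 0) := by
        simp only [pow_succ, Matrix.mul_apply]
        rw [Finset.sum_comm]
        have a1 : ∀ w : V, ∑ k ∈ Finset.range (j + 1), (GFF.transP G d ^ k) x w * GFF.transP G d w z
            = (d:ℝ)⁻¹ * (if G.Adj z w then ∑ k ∈ Finset.range (j + 1), (GFF.transP G d ^ k) x w else 0) := by
          intro w
          rw [← Finset.sum_mul]
          simp only [GFF.transP, Matrix.of_apply, G.adj_comm w z]
          split_ifs <;> ring
        simp only [a1]
        rw [← Finset.mul_sum]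
        congr 1
        have a2 : (∑ w : B, (if (G.induce B).Adj z w then
            ∑ k ∈ Finset.range (j + 1), (GFF.transP G d ^ k) x w else 0)) =
            ∑ w ∈ Finset.univ.filter (· ∈ B), (if G.Adj z w then
            ∑ k ∈ Finset.range (j + 1), (GFF.transP G d ^ k) x w else 0) := by
          rw [← Finset.sum_subtype_eq_sum_filter, Finset.subtype_univ]; rfl
        rw [a2, Finset.sum_filter]
        refine Finset.sum_congr rfl fun w _ => ?_
        by_cases hw : w ∈ B
        · simp [hw]
        · rw [if_neg hw]
          split_ifs
          · refine Finset.sum_eq_zero fun k hk => hzero w hw k ?_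
            have := Finset.mem_range.1 hk
            omega
          · rfl
      rw [e2]
      gcongr with w
      split_ifs
      · exact ih (by omega) w
      · exact le_rfl
  refine (ind R le_rfl ⟨y, hy⟩).trans ((hfb _).trans ?_)
  have hq1 : ((d:ℝ) - 1)⁻¹ ≤ 1 := inv_le_one_of_one_le₀ (by linarith)
  have := pow_le_pow_of_le_one (by positivity) hq1 (dist_le_induce B hc ⟨x, hx⟩ ⟨y, hy⟩)
  gcongr

end GUB

namespace GUB
open SimpleGraph

lemma transP_herm {V : Type*} [Fintype V] (G : SimpleGraph V) (d : ℕ) :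
    (GFF.transP G d).IsHermitian := by
  ext i j
  simp [GFF.transP, G.adj_comm]

lemma spec_pow {V : Type*} [Fintype V] {P : Matrix V V ℝ} (hP : P.IsHermitian) (k : ℕ) (x y : V) :
    (P ^ k) x y = ∑ i, hP.eigenvalues i ^ k * (hP.eigenvectorBasis i x * hP.eigenvectorBasis i y) := by
  induction k generalizing x with
  | zero =>
    have h := congrFun (congrFun (Unitary.coe_mul_star_self hP.eigenvectorUnitary) x) y
    rw [Matrix.mul_apply] at h
    rw [pow_zero, ← h]
    refine Finset.sum_congr rfl fun i _ => ?_
    simp [Matrix.star_apply]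
  | succ k ih =>
    rw [pow_succ', Matrix.mul_apply]
    simp only [ih, Finset.mul_sum]
    rw [Finset.sum_comm]
    refine Finset.sum_congr rfl fun i _ => ?_
    have h := congrFun (hP.mulVec_eigenvectorBasis i) x
    simp only [Matrix.mulVec, dotProduct, Pi.smul_apply, smul_eq_mul] at h
    rw [pow_succ]
    calc _ = (hP.eigenvalues i ^ k * hP.eigenvectorBasis i y) * ∑ w, P x w * hP.eigenvectorBasis i w := by
          rw [Finset.mul_sum]; exact Finset.sum_congr rfl fun w _ => by ring
      _ = _ := by rw [h]; ring

lemma hasSum_pois (s : ℝ) (t : ℝ) :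
    HasSum (fun k : ℕ => Real.exp (-t) * t ^ k / (Nat.factorial k) * s ^ k) (Real.exp (-t + t * s)) := by
  have h := (NormedSpace.expSeries_div_hasSum_exp (t * s)).mul_left (Real.exp (-t))
  rw [← Real.exp_eq_exp_ℝ, ← Real.exp_add] at h
  refine h.congr_fun ?_ |> fun h => h
  intro k
  rw [mul_pow]; ring

lemma heatK_spec {V : Type*} [Fintype V] (G : SimpleGraph V) (d : ℕ) (t : ℝ) (x y : V) :
    GFF.heatK G d t x y = ∑ i, Real.exp (-t + t * (transP_herm G d).eigenvalues i) *
      ((transP_herm G d).eigenvectorBasis i x * (transP_herm G d).eigenvectorBasis i y) := by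
  unfold GFF.heatK
  refine HasSum.tsum_eq ?_
  have : ∀ k : ℕ, Real.exp (-t) * t ^ k / (Nat.factorial k) * ((GFF.transP G d) ^ k) x y =
      ∑ i, Real.exp (-t) * t ^ k / (Nat.factorial k) * (transP_herm G d).eigenvalues i ^ k *
      ((transP_herm G d).eigenvectorBasis i x * (transP_herm G d).eigenvectorBasis i y) := by
    intro k
    rw [spec_pow (transP_herm G d), Finset.mul_sum]
    exact Finset.sum_congr rfl fun i _ => by ring
  simp only [this]
  exact hasSum_sum fun i _ => (hasSum_pois _ t).mul_right _

lemma heatK_le {V : Type*} [Fintype V] {G : SimpleGraph V} (hG : G.Connected) {d : ℕ} (hd : 3 ≤ d)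
    (hreg : GFF.IsReg G d) {β : ℝ} (hgap : GFF.SpectralGapLB G d β) (t : ℝ) (ht : 0 ≤ t) (x y : V) :
    GFF.heatK G d t x y - 1 / (Nat.card V : ℝ) ≤ Real.exp (-β * t) := by
  set hP := transP_herm G d with hPdef
  have hd0 : (d:ℝ) ≠ 0 := by positivity
  have : Nonempty V := ⟨x⟩
  have hN : (Nat.card V : ℝ) ≠ 0 := by
    simp
  have heig : ∀ i z, ∑ w, GFF.transP G d z w * hP.eigenvectorBasis i w =
      hP.eigenvalues i * hP.eigenvectorBasis i z := by
    intro i z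
    have h := congrFun (hP.mulVec_eigenvectorBasis i) z
    simpa only [Matrix.mulVec, dotProduct, Pi.smul_apply, smul_eq_mul] using h
  have hrow : ∀ z, ∑ w, GFF.transP G d z w = 1 := by
    intro z
    have := transP_pow_sum hd hreg 1 z
    simpa using this
  have hcol : ∀ z, ∑ w, GFF.transP G d w z = 1 := by
    intro z
    rw [← hrow z]
    exact Finset.sum_congr rfl fun w _ => by simp [GFF.transP, G.adj_comm]
  -- constants
  have hconst : ∀ i, hP.eigenvalues i = 1 → ∀ a b, hP.eigenvectorBasis i a = hP.eigenvectorBasis i b := by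
    intro i hi a b
    have := (lapMatrix_mulVec_eq_zero_iff_forall_reachable (G := G)
      (x := fun z => hP.eigenvectorBasis i z)).1 ?_ a b (hG a b)
    · exact this
    · ext z
      rw [lapMatrix_mulVec_apply]
      have h := heig i z
      rw [hi, one_mul] at h
      have hdz : (G.degree z : ℝ) = d := by
        rw [← hreg z, Nat.card_eq_fintype_card, card_neighborSet_eq_degree]
      rw [hdz, ← h]
      have e : ∀ w, GFF.transP G d z w * hP.eigenvectorBasis i w =
        (d:ℝ)⁻¹ * (if G.Adj z w then hP.eigenvectorBasis i w else 0) := by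
        intro w; simp [GFF.transP]
      simp only [e, ← Finset.mul_sum]
      rw [← mul_assoc, mul_inv_cancel₀ hd0, one_mul, ← Finset.sum_filter]
      rw [neighborFinset_eq_filter]
      simp
  have horth : ∀ i, hP.eigenvalues i ≠ 1 → ∑ z, hP.eigenvectorBasis i z = 0 := by
    intro i hi
    have h : ∑ z, hP.eigenvalues i * hP.eigenvectorBasis i z = ∑ z, hP.eigenvectorBasis i z := by
      simp only [← heig i]
      rw [Finset.sum_comm]
      refine Finset.sum_congr rfl fun w _ => ?_
      rw [← Finset.sum_mul, hcol, one_mul]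
    rw [← Finset.mul_sum] at h
    have : (hP.eigenvalues i - 1) * ∑ z, hP.eigenvectorBasis i z = 0 := by linarith
    rcases mul_eq_zero.1 this with h | h
    · exact absurd (by linarith) hi
    · exact h
  have hdelta : ∀ a b, ∑ i, hP.eigenvectorBasis i a * hP.eigenvectorBasis i b = if a = b then 1 else 0 := by
    intro a b
    have := spec_pow hP 0 a b
    simp only [pow_zero, one_mul] at this
    rw [← this, Matrix.one_apply]
  have hproj : ∑ i, (if hP.eigenvalues i = 1 then hP.eigenvectorBasis i x * hP.eigenvectorBasis i y else 0)
      = 1 / (Nat.card V : ℝ) := by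
    have h1 : ∑ a, ∑ i, hP.eigenvectorBasis i a * hP.eigenvectorBasis i y = 1 := by
      simp [hdelta]
    rw [Finset.sum_comm] at h1
    rw [eq_div_iff hN, Finset.sum_mul]
    refine Eq.trans ?_ h1
    refine Finset.sum_congr rfl fun i _ => ?_
    rw [← Finset.sum_mul]
    split_ifs with hi
    · rw [Finset.sum_congr rfl fun a _ => hconst i hi a x]
      simp; ring
    · rw [horth i hi]; simp
  rw [heatK_spec, ← hproj, ← Finset.sum_sub_distrib]
  have hb : ∀ i, Real.exp (-t + t * hP.eigenvalues i) * (hP.eigenvectorBasis i x * hP.eigenvectorBasis i y)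
      - (if hP.eigenvalues i = 1 then hP.eigenvectorBasis i x * hP.eigenvectorBasis i y else 0) ≤
      Real.exp (-β * t) * ((hP.eigenvectorBasis i x * hP.eigenvectorBasis i x +
        hP.eigenvectorBasis i y * hP.eigenvectorBasis i y) / 2) := by
    intro i
    have hnn : 0 ≤ (hP.eigenvectorBasis i x * hP.eigenvectorBasis i x +
        hP.eigenvectorBasis i y * hP.eigenvectorBasis i y) / 2 := by
      nlinarith [mul_self_nonneg (hP.eigenvectorBasis i x), mul_self_nonneg (hP.eigenvectorBasis i y)]
    split_ifs with hi
    · rw [hi]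
      have : -t + t * 1 = 0 := by ring
      rw [this, Real.exp_zero, one_mul, sub_self]
      positivity
    · rw [sub_zero]
      have hlam : β ≤ 1 - hP.eigenvalues i := by
        have g1 : Matrix.mulVec ((1 : Matrix V V ℝ) - GFF.transP G d)
            (fun z => hP.eigenvectorBasis i z) =
            (1 - hP.eigenvalues i) • (fun z => hP.eigenvectorBasis i z) := by
          ext z
          rw [Matrix.sub_mulVec, Matrix.one_mulVec]
          simp only [Pi.sub_apply, Pi.smul_apply, smul_eq_mul, Matrix.mulVec, dotProduct, heig]
          ring
        have g2 : (fun z => hP.eigenvectorBasis i z) ≠ 0 := by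
          intro h0
          apply hP.eigenvectorBasis.orthonormal.ne_zero i
          ext z
          exact congrFun h0 z
        rcases hgap _ _ g1 g2 with h | h
        · exact absurd (by linarith) hi
        · exact h
      have he : Real.exp (-t + t * hP.eigenvalues i) ≤ Real.exp (-β * t) := by
        apply Real.exp_le_exp.2; nlinarith
      refine le_trans (mul_le_mul_of_nonneg_left ?_ (Real.exp_pos _).le) (mul_le_mul_of_nonneg_right he hnn)
      nlinarith [mul_self_nonneg (hP.eigenvectorBasis i x - hP.eigenvectorBasis i y)]
  refine (Finset.sum_le_sum fun i _ => hb i).trans (le_of_eq ?_)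
  rw [← Finset.mul_sum, ← Finset.sum_div, Finset.sum_add_distrib, hdelta, hdelta]
  simp

lemma heatK_short {V : Type*} [Fintype V] {G : SimpleGraph V} {d : ℕ} (hd : 3 ≤ d)
    (hreg : GFF.IsReg G d) (R : ℕ) (T t : ℝ) (ht : 0 ≤ t) (htT : t ≤ T)
    (hm : Real.exp 1 * T ≤ R + 1) (x y : V) :
    GFF.heatK G d t x y ≤ ∑ k ∈ Finset.range (R + 1),
      Real.exp (-t) * t ^ k / (Nat.factorial k) * ((GFF.transP G d) ^ k) x y + Real.exp (-T) := by
  set m : ℝ := Real.exp 1 * T with hmdef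
  have hpois : ∀ k : ℕ, 0 ≤ Real.exp (-t) * t ^ k / (Nat.factorial k) := fun k => by positivity
  have hsum : Summable fun k : ℕ => Real.exp (-t) * t ^ k / (Nat.factorial k) * ((GFF.transP G d) ^ k) x y := by
    refine Summable.of_nonneg_of_le (fun k => mul_nonneg (hpois k) (transP_pow_nonneg G d k x y))
      (fun k => mul_le_mul_of_nonneg_left (transP_pow_le_one hd hreg k x y) (hpois k)) ?_
    simpa using (hasSum_pois 1 t).summable
  have h1 : HasSum (fun k : ℕ => if k ∈ Finset.range (R + 1) then
      Real.exp (-t) * t ^ k / (Nat.factorial k) * ((GFF.transP G d) ^ k) x y else 0)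
      (∑ k ∈ Finset.range (R + 1),
      Real.exp (-t) * t ^ k / (Nat.factorial k) * ((GFF.transP G d) ^ k) x y) := by
    have := hasSum_sum_of_ne_finset_zero (L := .unconditional ℕ) (s := Finset.range (R + 1)) (f := fun k : ℕ => if k ∈ Finset.range (R + 1) then
      Real.exp (-t) * t ^ k / (Nat.factorial k) * ((GFF.transP G d) ^ k) x y else 0)
      (fun k hk => if_neg hk)
    rwa [Finset.sum_congr rfl fun k hk => if_pos hk] at this
  have h2 := (hasSum_pois (Real.exp 1) t).mul_right (Real.exp (-m))
  have h3 := hasSum_le (fun k => ?_) hsum.hasSum (h1.add h2)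
  · refine h3.trans ?_
    gcongr
    rw [← Real.exp_add]
    apply Real.exp_le_exp.2
    have : 1 ≤ Real.exp 1 := Real.one_le_exp (by norm_num)
    nlinarith
  · by_cases hk : k ∈ Finset.range (R + 1)
    · simp only [hk, if_true]
      have : 0 ≤ Real.exp (-t) * t ^ k / (Nat.factorial k) * Real.exp 1 ^ k * Real.exp (-m) := by positivity
      linarith
    · simp only [hk, if_false, zero_add]
      rw [mul_assoc]
      refine mul_le_mul_of_nonneg_left ((transP_pow_le_one hd hreg k x y).trans ?_) (hpois k)
      rw [← Real.exp_nat_mul, ← Real.exp_add]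
      apply Real.one_le_exp
      have : R + 1 ≤ k := by simpa using hk
      have : (R:ℝ) + 1 ≤ k := by exact_mod_cast this
      linarith

lemma pois_int (k : ℕ) : IntegrableOn (fun t : ℝ => Real.exp (-t) * t ^ k / (Nat.factorial k)) (Ioi 0) ∧
    ∫ t in Ioi (0:ℝ), Real.exp (-t) * t ^ k / (Nat.factorial k) = 1 := by
  have h1 := Real.GammaIntegral_convergent (s := (k:ℝ) + 1) (by positivity)
  have h2 := Real.Gamma_eq_integral (s := (k:ℝ) + 1) (by positivity)
  rw [Real.Gamma_nat_eq_factorial] at h2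
  simp only [add_sub_cancel_right, Real.rpow_natCast] at h1 h2
  refine ⟨h1.div_const _, ?_⟩
  rw [integral_div, ← h2]
  field_simp

end GUB

/-- upper bound on the zero-average Green function. -/
theorem green_function_upper_bound
    (d : ℕ) (hd : 3 ≤ d)
    (V : ℕ → Type) [∀ n, Fintype (V n)]
    (G : ∀ n, SimpleGraph (V n)) (N : ℕ → ℕ) (α β : ℝ)
    (hα : 0 < α ∧ α ≤ 1) (hβ : 0 < β ∧ β ≤ 2)
    (hNmono : StrictMono N) (hNpos : ∀ n, 1 ≤ N n)
    (hcard : ∀ n, Nat.card (V n) = N n)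
    (hconn : ∀ n, (G n).Connected)
    (hreg : ∀ n, GFF.IsReg (G n) d)
    (hcyc : ∀ n (x : V n),
      GFF.adjPairs (G n) (GFF.gball (G n) x ⌊α * Real.logb ((d : ℝ) - 1) (N n : ℝ)⌋₊) ≤
        2 * (GFF.gball (G n) x ⌊α * Real.logb ((d : ℝ) - 1) (N n : ℝ)⌋₊).ncard)
    (hgap : ∀ n, GFF.SpectralGapLB (G n) d β) :
    ∀ (n : ℕ) (x y : V n),
      GFF.zGreen (G n) d (N n) x y ≤
        16 / 7 * (((d : ℝ) - 1) / ((d : ℝ) - 2)) * (((d : ℝ) - 1)⁻¹) ^ ((G n).dist x y)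
          + 2 * Real.log (N n) * (N n : ℝ) ^ (-(GFF.c0 d α β) / β)
          + 1 / (β * (N n : ℝ) ^ (GFF.c0 d α β)) := by
  intro n x y
  have hd' : (3:ℝ) ≤ d := by exact_mod_cast hd
  have h1 : (0:ℝ) < (d:ℝ) - 1 := by linarith
  have h2 : (0:ℝ) < (d:ℝ) - 2 := by linarith
  obtain ⟨hα0, hα1⟩ := hα
  obtain ⟨hβ0, hβ2⟩ := hβ
  have hN1 : (1:ℝ) ≤ (N n : ℝ) := by exact_mod_cast hNpos n
  have hN0 : (0:ℝ) < (N n : ℝ) := by linarith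
  have hlogN : 0 ≤ Real.log (N n) := Real.log_nonneg hN1
  obtain ⟨T, hT⟩ : ∃ T, T = α * Real.log (N n) / ((d:ℝ) - 1) := ⟨_, rfl⟩
  have hT0 : 0 ≤ T := by rw [hT]; positivity
  have hTle : T ≤ 2 * Real.log (N n) := by
    rw [hT, div_le_iff₀ h1]
    nlinarith [mul_le_mul_of_nonneg_right hα1 hlogN]
  have e1 : (N n : ℝ) ^ (-(GFF.c0 d α β) / β) = Real.exp (-T) := by
    rw [Real.rpow_def_of_pos hN0, hT, GFF.c0]
    congr 1; field_simp
  have e2 : 1 / (β * (N n : ℝ) ^ (GFF.c0 d α β)) = Real.exp (-β * T) / β := by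
    have : (N n : ℝ) ^ (GFF.c0 d α β) = Real.exp (β * T) := by
      rw [Real.rpow_def_of_pos hN0, hT, GFF.c0]
      congr 1; field_simp
    rw [this, neg_mul, Real.exp_neg]; field_simp
  rw [e1, e2]
  obtain ⟨R, hR⟩ : ∃ R, R = ⌊α * Real.logb ((d : ℝ) - 1) (N n : ℝ)⌋₊ := ⟨_, rfl⟩
  have hS := GUB.sum_pow_le (hconn n) hd (hreg n) x y R (by rw [hR]; exact hcyc n x)
  have hm : Real.exp 1 * T ≤ R + 1 := by
    have a1 : α * Real.logb ((d : ℝ) - 1) (N n : ℝ) ≤ R + 1 := by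
      rw [hR]; exact (Nat.lt_floor_add_one _).le
    refine le_trans ?_ a1
    have hl : 0 < Real.log ((d:ℝ) - 1) := Real.log_pos (by linarith)
    have hb : Real.exp 1 * Real.log ((d:ℝ) - 1) ≤ (d:ℝ) - 1 := by
      have := Real.log_le_sub_one_of_pos (show 0 < ((d:ℝ) - 1) / Real.exp 1 by positivity)
      rw [Real.log_div h1.ne' (Real.exp_pos 1).ne', Real.log_exp] at this
      have : Real.log ((d:ℝ) - 1) ≤ ((d:ℝ) - 1) / Real.exp 1 := by linarith
      rw [le_div_iff₀ (Real.exp_pos 1)] at this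
      linarith
    rw [hT, Real.logb]
    have : Real.exp 1 * (α * Real.log (N n) / ((d:ℝ) - 1)) =
        (α * Real.log (N n)) * (Real.exp 1 / ((d:ℝ) - 1)) := by ring
    rw [this]
    have : α * (Real.log (N n) / Real.log ((d:ℝ) - 1)) =
        (α * Real.log (N n)) * (1 / Real.log ((d:ℝ) - 1)) := by ring
    rw [this]
    apply mul_le_mul_of_nonneg_left _ (by positivity)
    rw [div_le_div_iff₀ h1 hl]; linarith
  have hA0 : 0 ≤ 16 / 7 * (((d : ℝ) - 1) / ((d : ℝ) - 2)) * (((d : ℝ) - 1)⁻¹) ^ ((G n).dist x y) := by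
    positivity
  have hB0 : 0 ≤ 2 * Real.log (N n) * Real.exp (-T) := by positivity
  have hC0 : 0 ≤ Real.exp (-β * T) / β := by positivity
  unfold GFF.zGreen
  by_cases hint : IntegrableOn (fun t => GFF.heatK (G n) d t x y - 1 / (N n : ℝ)) (Ioi 0)
  swap
  · rw [integral_undef hint]; linarith
  have hsplit : Ioi (0:ℝ) = Ioc 0 T ∪ Ioi T := (Ioc_union_Ioi_eq_Ioi hT0).symm
  have hi1 := hint.mono_set (show Ioc (0:ℝ) T ⊆ Ioi 0 from Ioc_subset_Ioi_self)
  have hi2 := hint.mono_set (show Ioi T ⊆ Ioi (0:ℝ) from Ioi_subset_Ioi hT0)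
  rw [hsplit, setIntegral_union (Ioc_disjoint_Ioi le_rfl) measurableSet_Ioi hi1 hi2]
  have hlong : ∫ t in Ioi T, (GFF.heatK (G n) d t x y - 1 / (N n : ℝ)) ≤ Real.exp (-β * T) / β := by
    have := integral_exp_mul_Ioi (a := -β) (by linarith) T
    have hval : Real.exp (-β * T) / β = ∫ t in Ioi T, Real.exp (-β * t) := by
      rw [this]; field_simp
    rw [hval]
    refine setIntegral_mono_on hi2 (integrableOn_exp_mul_Ioi (by linarith) T) measurableSet_Ioi ?_
    intro t ht
    have := GUB.heatK_le (hconn n) hd (hreg n) (hgap n) t (hT0.trans (le_of_lt ht)) x y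
    rw [hcard n] at this
    exact this
  have hpI : ∀ k : ℕ, IntegrableOn (fun t : ℝ => Real.exp (-t) * t ^ k / (Nat.factorial k) *
      ((GFF.transP (G n) d) ^ k) x y) (Ioc 0 T) := fun k =>
    ((GUB.pois_int k).1.mono_set Ioc_subset_Ioi_self).mul_const _
  have hshort : ∫ t in Ioc 0 T, (GFF.heatK (G n) d t x y - 1 / (N n : ℝ)) ≤
      ∑ k ∈ Finset.range (R + 1), ((GFF.transP (G n) d) ^ k) x y + T * Real.exp (-T) := by
    have hcI : IntegrableOn (fun _ : ℝ => Real.exp (-T)) (Ioc 0 T) := by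
      simp
    have hsI : IntegrableOn (fun t : ℝ => ∑ k ∈ Finset.range (R + 1),
        Real.exp (-t) * t ^ k / (Nat.factorial k) * ((GFF.transP (G n) d) ^ k) x y) (Ioc 0 T) :=
      integrable_finsetSum _ fun k _ => hpI k
    calc ∫ t in Ioc 0 T, (GFF.heatK (G n) d t x y - 1 / (N n : ℝ))
        ≤ ∫ t in Ioc 0 T, (∑ k ∈ Finset.range (R + 1),
          Real.exp (-t) * t ^ k / (Nat.factorial k) * ((GFF.transP (G n) d) ^ k) x y + Real.exp (-T)) := by
          refine setIntegral_mono_on hi1 (hsI.add hcI) measurableSet_Ioc ?_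
          intro t ht
          have := GUB.heatK_short hd (hreg n) R T t ht.1.le ht.2 hm x y
          have : (0:ℝ) ≤ 1 / (N n : ℝ) := by positivity
          linarith
      _ = ∑ k ∈ Finset.range (R + 1), (∫ t in Ioc 0 T,
          Real.exp (-t) * t ^ k / (Nat.factorial k)) * ((GFF.transP (G n) d) ^ k) x y
          + T * Real.exp (-T) := by
          rw [integral_add hsI hcI, integral_finsetSum _ fun k _ => hpI k]
          congr 1
          · exact Finset.sum_congr rfl fun k _ => integral_mul_const _ _
          · simp [hT0]
      _ ≤ _ := by
          gcongr with k hk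
          refine mul_le_of_le_one_left (GUB.transP_pow_nonneg _ _ _ _ _) ?_
          rw [← (GUB.pois_int k).2]
          refine setIntegral_mono_set (GUB.pois_int k).1 ?_ (LE.le.eventuallyLE Ioc_subset_Ioi_self)
          filter_upwards [ae_restrict_mem measurableSet_Ioi] with t ht
          have : (0:ℝ) < t := ht
          simp only [Pi.zero_apply]
          positivity
  have : T * Real.exp (-T) ≤ 2 * Real.log (N n) * Real.exp (-T) := by gcongr
  linarith
end

section
/- For all sufficiently large n and all vertices x, y of G_n with d_{G_n}(x,y) ≤ (c_0/3)·log_{d−1}(N_n), the zero-average Green function satisfies G_{G_n}(x,y) ≤ 3·((d−1)/(d−2))·(1/(d−1))^{d_{G_n}(x,y)}, where d_{G_n} is the graph distance on G_n. -/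
open MeasureTheory ProbabilityTheory Filter Set
open scoped ENNReal NNReal ENat Classical

namespace GreenAux

lemma tree_unique {W : Type*} {T : SimpleGraph W} (hT : T.IsTree) {w z a b : W}
    (ha : T.Adj z a) (hb : T.Adj z b) (hda : T.dist w z = T.dist w a + 1)
    (hdb : T.dist w z = T.dist w b + 1) : a = b := by
  obtain ⟨p, hp, hpl⟩ := hT.connected.exists_path_of_dist a w
  obtain ⟨p', hp', hpl'⟩ := hT.connected.exists_path_of_dist b w
  have h1 : (SimpleGraph.Walk.cons ha p).IsPath := by
    apply SimpleGraph.Walk.isPath_of_length_eq_dist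
    rw [SimpleGraph.Walk.length_cons, hpl, T.dist_comm (u := z), hda, T.dist_comm]
  have h2 : (SimpleGraph.Walk.cons hb p').IsPath := by
    apply SimpleGraph.Walk.isPath_of_length_eq_dist
    rw [SimpleGraph.Walk.length_cons, hpl', T.dist_comm (u := z), hdb, T.dist_comm]
  have := (hT.isAcyclic.subsingleton_path z w).elim ⟨_, h1⟩ ⟨_, h2⟩
  have h3 := congrArg (fun r : T.Path z w => r.1.snd) this
  simpa using h3

lemma tree_exists {W : Type*} {T : SimpleGraph W} (hT : T.IsTree) {w z : W} (h : z ≠ w) :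
    ∃ a, T.Adj z a ∧ T.dist w z = T.dist w a + 1 := by
  obtain ⟨p, hp⟩ := hT.connected.exists_walk_length_eq_dist z w
  cases p with
  | nil => exact absurd rfl h
  | @cons _ a _ hadj p =>
    refine ⟨a, hadj, ?_⟩
    have h1 := T.dist_le p
    have h2 := hT.dist_eq_dist_add_one_of_adj w hadj
    rw [SimpleGraph.Walk.length_cons, T.dist_comm (u := z)] at hp
    rw [T.dist_comm (u := a)] at h1
    omega

lemma tree_sum {W : Type*} [Fintype W] {T : SimpleGraph W} (hT : T.IsTree) (w z : W)
    (q : ℝ) (hq : 0 < q) :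
    ∑ a ∈ T.neighborFinset z, (q⁻¹) ^ (T.dist w a) =
      (T.degree z : ℝ) / q * (q⁻¹) ^ (T.dist w z) +
        (q - 1 / q) * ((q⁻¹) ^ (T.dist w z) - if z = w then 1 else 0) := by
  by_cases h : z = w
  · subst h
    have : ∀ a ∈ T.neighborFinset z, (q⁻¹) ^ (T.dist z a) = q⁻¹ := by
      intro a ha
      rw [SimpleGraph.mem_neighborFinset] at ha
      rw [SimpleGraph.dist_eq_one_iff_adj.2 ha, pow_one]
    rw [Finset.sum_congr rfl this]
    simp [div_eq_mul_inv]
  · obtain ⟨a, ha, hda⟩ := tree_exists hT h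
    have hm : a ∈ T.neighborFinset z := by simpa using ha
    rw [← Finset.add_sum_erase _ _ hm]
    have : ∀ b ∈ (T.neighborFinset z).erase a, (q⁻¹) ^ (T.dist w b) =
        q⁻¹ ^ (T.dist w z) * q⁻¹ := by
      intro b hb
      rw [Finset.mem_erase, SimpleGraph.mem_neighborFinset] at hb
      rcases hT.dist_eq_dist_add_one_of_adj w hb.2 with h1 | h1
      · exact absurd (tree_unique hT hb.2 ha h1 hda) hb.1
      · rw [h1, pow_succ]
    rw [Finset.sum_congr rfl this, Finset.sum_const, Finset.card_erase_of_mem hm,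
      SimpleGraph.card_neighborFinset_eq_degree, hda, if_neg h, nsmul_eq_mul]
    have hpos : 1 ≤ T.degree z := by
      rw [← SimpleGraph.card_neighborFinset_eq_degree]
      exact Finset.card_pos.2 ⟨a, hm⟩
    push_cast [hpos]
    rw [pow_succ]
    field_simp
    ring

/-- `T` is `H` minus at most one edge -/
def AtMostOne {W : Type*} (H T : SimpleGraph W) (u v : W) : Prop :=
  H.Adj u v ∧ ¬ T.Adj u v ∧ ∀ a b, H.Adj a b → T.Adj a b ∨ (a = u ∧ b = v) ∨ (a = v ∧ b = u)

lemma sum_extra {W : Type*} [Fintype W] {H T : SimpleGraph W} (hle : T ≤ H) {u v : W}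
    (h : AtMostOne H T u v) (z : W) (f : W → ℝ) :
    ∑ a ∈ H.neighborFinset z, f a = ∑ a ∈ T.neighborFinset z, f a +
      (if z = u then f v else 0) + (if z = v then f u else 0) := by
  obtain ⟨h1, h2, h3⟩ := h
  have hne := h1.ne
  by_cases hu : z = u
  · subst hu
    have : H.neighborFinset z = insert v (T.neighborFinset z) := by
      ext b
      simp only [SimpleGraph.mem_neighborFinset, Finset.mem_insert]
      constructor
      · intro hb
        rcases h3 _ _ hb with h | h | h
        · exact Or.inr h
        · exact Or.inl h.2
        · exact absurd h.1 hne
      · rintro (rfl | hb)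
        · exact h1
        · exact hle hb
    rw [this, Finset.sum_insert (by simpa using h2)]
    simp [hne, add_comm]
  · by_cases hv : z = v
    · subst hv
      have : H.neighborFinset z = insert u (T.neighborFinset z) := by
        ext b
        simp only [SimpleGraph.mem_neighborFinset, Finset.mem_insert]
        constructor
        · intro hb
          rcases h3 _ _ hb with h | h | h
          · exact Or.inr h
          · exact absurd h.1 hu
          · exact Or.inl h.2
        · rintro (rfl | hb)
          · exact h1.symm
          · exact hle hb
      rw [this, Finset.sum_insert (by simpa using fun h => h2 h.symm)]
      simp [hu, add_comm]
    · have : H.neighborFinset z = T.neighborFinset z := by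
        ext b
        simp only [SimpleGraph.mem_neighborFinset]
        constructor
        · intro hb
          rcases h3 _ _ hb with h | h | h
          · exact h
          · exact absurd h.1 hu
          · exact absurd h.1 hv
        · exact fun hb => hle hb
      rw [this]; simp [hu, hv]

lemma core_tree {W : Type*} [Fintype W] {T : SimpleGraph W} (hT : T.IsTree)
    (q : ℝ) (hq : 2 ≤ q) (x y : W) (D : ℕ) (hD : D ≤ T.dist x y) :
    ∃ h : W → ℝ, (∀ z, 0 ≤ h z) ∧
      (∀ z, (T.degree z : ℝ) = q + 1 →
        (q + 1) * (if z = y then 1 else 0) + ∑ a ∈ T.neighborFinset z, h a ≤ (q + 1) * h z) ∧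
      h x ≤ 17 / 7 * (q / (q - 1)) * (q⁻¹) ^ D := by
  have hq0 : 0 < q := by linarith
  have hq1 : 0 < q - 1 := by linarith
  refine ⟨fun z => q / (q - 1) * (q⁻¹) ^ (T.dist y z), fun z => by positivity, ?_, ?_⟩
  · intro z hz
    rw [← Finset.mul_sum, tree_sum hT y z q hq0, hz]
    apply le_of_eq
    beta_reduce
    generalize (q⁻¹) ^ (T.dist y z) = A
    generalize (if z = y then (1:ℝ) else 0) = B
    field_simp
    ring
  · have h1 : (q⁻¹) ^ (T.dist y x) ≤ (q⁻¹) ^ D :=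
      pow_le_pow_of_le_one (by positivity) (inv_le_one_of_one_le₀ (by linarith))
        (by rwa [T.dist_comm])
    have h2 : 0 < q / (q - 1) := by positivity
    have h3 : 0 < (q⁻¹) ^ D := by positivity
    have := mul_le_mul_of_nonneg_left h1 h2.le
    have := mul_pos h2 h3
    show q / (q - 1) * (q⁻¹) ^ (T.dist y x) ≤ _
    linarith

lemma core_alg (q : ℝ) (hq : 2 ≤ q) (D A A' : ℕ) (hA : D ≤ A) (hA' : D ≤ A')
    (hs : 2 * D + 2 ≤ A + A') :
    (q⁻¹) ^ A + (q⁻¹) ^ A' ≤ 5 / 4 * (q⁻¹) ^ D := by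
  have hr0 : 0 < q⁻¹ := by positivity
  have hr : q⁻¹ ≤ 1 / 2 := by
    rw [one_div]; exact inv_anti₀ (by norm_num) hq
  generalize q⁻¹ = q' at *
  have key : ∀ k m : ℕ, D + k ≤ m → q' ^ m ≤ (1/2) ^ k * q' ^ D := by
    intro k m h
    calc q' ^ m ≤ q' ^ (D + k) := pow_le_pow_of_le_one hr0.le (by linarith) h
      _ = q' ^ k * q' ^ D := by rw [pow_add, mul_comm]
      _ ≤ _ := by gcongr
  have hDp : 0 < q' ^ D := by positivity
  by_cases c1 : A = D
  · have := key 0 A (by omega)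
    have := key 2 A' (by omega)
    norm_num at *; linarith
  by_cases c2 : A' = D
  · have := key 0 A' (by omega)
    have := key 2 A (by omega)
    norm_num at *; linarith
  have := key 1 A (by omega)
  have := key 1 A' (by omega)
  norm_num at *; linarith

lemma core_cycle {W : Type*} [Fintype W] {H T : SimpleGraph W} (hT : T.IsTree) (hle : T ≤ H)
    {u v : W} (huv : AtMostOne H T u v)
    (q : ℝ) (hq : 2 ≤ q) (x y : W) (D : ℕ) (hD : D ≤ H.dist x y) :
    ∃ h : W → ℝ, (∀ z, 0 ≤ h z) ∧
      (∀ z, (H.degree z : ℝ) = q + 1 →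
        (q + 1) * (if z = y then 1 else 0) + ∑ a ∈ H.neighborFinset z, h a ≤ (q + 1) * h z) ∧
      h x ≤ 17 / 7 * (q / (q - 1)) * (q⁻¹) ^ D := by
  have hq0 : 0 < q := by linarith
  have hq1 : 0 < q - 1 := by linarith
  have hr0 : 0 < q⁻¹ := by positivity
  have hr : q⁻¹ ≤ 1 / 2 := by
    rw [one_div]; exact inv_anti₀ (by norm_num) hq
  have hHc : H.Connected := hT.connected.mono hle
  have hTH : ∀ a b, H.dist a b ≤ T.dist a b := fun a b =>
    SimpleGraph.Reachable.dist_anti hle (hT.connected a b)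
  have huv1 : H.dist u v = 1 := SimpleGraph.dist_eq_one_iff_adj.2 huv.1
  have hne : u ≠ v := huv.1.ne
  have hl2 : 2 ≤ T.dist u v := by
    have := hT.connected.one_lt_dist_of_ne_of_not_adj hne huv.2.1
    omega
  set ε : ℝ := (q⁻¹) ^ (T.dist u v) with hε
  have hε0 : 0 < ε := by positivity
  have hε1 : ε ≤ 1 / 4 := by
    calc ε ≤ (q⁻¹) ^ 2 := pow_le_pow_of_le_one hr0.le (by linarith) hl2
      _ ≤ (1/2) ^ 2 := by gcongr
      _ = _ := by norm_num
  have hqe : 0 < q - ε := by linarith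
  set pu : ℝ := (q⁻¹) ^ (T.dist y u) with hpu
  set pv : ℝ := (q⁻¹) ^ (T.dist y v) with hpv
  have hpu0 : 0 < pu := by positivity
  have hpv0 : 0 < pv := by positivity
  refine ⟨fun z => q / (q - 1) * ((q⁻¹) ^ (T.dist y z) + (pv / (q - ε)) * (q⁻¹) ^ (T.dist u z)
    + (pu / (q - ε)) * (q⁻¹) ^ (T.dist v z)), fun z => by positivity, ?_, ?_⟩
  · intro z hz
    have hdeg : (T.degree z : ℝ) + (if z = u then 1 else 0) + (if z = v then 1 else 0) = q + 1 := by
      have := sum_extra hle huv z (fun _ => 1)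
      simp only [Finset.sum_const, SimpleGraph.card_neighborFinset_eq_degree, nsmul_eq_mul,
        mul_one] at this
      rw [← this, hz]
    have hS : ∀ w, ∑ a ∈ H.neighborFinset z, (q⁻¹) ^ (T.dist w a) =
       (T.degree z : ℝ) / q * (q⁻¹) ^ (T.dist w z) +
        (q - 1 / q) * ((q⁻¹) ^ (T.dist w z) - if z = w then 1 else 0) +
        (if z = u then (q⁻¹) ^ (T.dist w v) else 0) +
        (if z = v then (q⁻¹) ^ (T.dist w u) else 0) := by
      intro w
      rw [sum_extra hle huv z, tree_sum hT w z q hq0]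
    rw [← Finset.mul_sum, Finset.sum_add_distrib, Finset.sum_add_distrib, ← Finset.mul_sum,
      ← Finset.mul_sum, hS, hS, hS]
    have hdeg' : (T.degree z : ℝ) = q + 1 - (if z = u then 1 else 0) - (if z = v then 1 else 0) := by
      linarith
    rw [hdeg']
    apply le_of_eq
    by_cases hzu : z = u
    · subst hzu
      simp only [if_true, if_neg hne, SimpleGraph.dist_self, pow_zero, T.dist_comm (u := v) (v := z),
        ← hε, ← hpu, ← hpv]
      generalize (if z = y then (1:ℝ) else 0) = B
      clear_value pu pv ε
      field_simp
      ring
    · by_cases hzv : z = v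
      · subst hzv
        simp only [if_true, if_neg hzu, SimpleGraph.dist_self, pow_zero,
          T.dist_comm (u := z) (v := u), ← hε, ← hpu, ← hpv]
        generalize (if z = y then (1:ℝ) else 0) = B
        clear_value pu pv ε
        field_simp
        ring
      · simp only [if_neg hzu, if_neg hzv]
        generalize (if z = y then (1:ℝ) else 0) = B
        generalize (q⁻¹) ^ (T.dist y z) = A1
        generalize (q⁻¹) ^ (T.dist u z) = A2
        generalize (q⁻¹) ^ (T.dist v z) = A3
        clear_value pu pv ε
        field_simp
        ring
  · have e0 : (q⁻¹) ^ (T.dist y x) ≤ (q⁻¹) ^ D := by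
      apply pow_le_pow_of_le_one hr0.le (by linarith)
      have := hTH x y
      rw [T.dist_comm]; omega
    have c := core_alg q hq D (T.dist y v + T.dist u x + 1) (T.dist y u + T.dist v x + 1) ?_ ?_ ?_
    · have hc : ∀ m n : ℕ, (q⁻¹) ^ m / (q - ε) * (q⁻¹) ^ n =
          (q⁻¹) ^ (m + n + 1) * (q / (q - ε)) := by
        intro m n
        rw [pow_succ, pow_add]; field_simp
      have hqq : q / (q - ε) ≤ 8 / 7 := by
        rw [div_le_div_iff₀ hqe (by norm_num)]; linarith
      have hqq0 : 0 < q / (q - ε) := by positivity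
      have hDp : 0 < (q⁻¹) ^ D := by positivity
      show q / (q - 1) * ((q⁻¹) ^ (T.dist y x) + (pv / (q - ε)) * (q⁻¹) ^ (T.dist u x)
        + (pu / (q - ε)) * (q⁻¹) ^ (T.dist v x)) ≤ _
      rw [hpu, hpv, hc, hc]
      have : (q⁻¹) ^ (T.dist y x) + (q⁻¹) ^ (T.dist y v + T.dist u x + 1) * (q / (q - ε))
        + (q⁻¹) ^ (T.dist y u + T.dist v x + 1) * (q / (q - ε)) ≤ 17 / 7 * (q⁻¹) ^ D := by
        have h1 := mul_le_mul c hqq hqq0.le (by positivity)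
        linarith
      calc _ ≤ q / (q - 1) * (17 / 7 * (q⁻¹) ^ D) := by gcongr
        _ = _ := by ring
    · have h1 := hHc.dist_triangle (u := x) (v := u) (w := y)
      have h2 := hHc.dist_triangle (u := u) (v := v) (w := y)
      have h3 := hTH u x
      have h4 := hTH y v
      rw [H.dist_comm (u := u) (v := x)] at h3
      rw [H.dist_comm (u := y) (v := v)] at h4
      omega
    · have h1 := hHc.dist_triangle (u := x) (v := v) (w := y)
      have h2 := hHc.dist_triangle (u := v) (v := u) (w := y)
      have h3 := hTH v x
      have h4 := hTH y u
      rw [H.dist_comm (u := v) (v := x)] at h3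
      rw [H.dist_comm (u := y) (v := u)] at h4
      rw [H.dist_comm (u := v) (v := u)] at h2
      omega
    · have h1 := hT.connected.dist_triangle (u := y) (v := v) (w := x)
      have h2 := hT.connected.dist_triangle (u := y) (v := u) (w := x)
      have h3 := hTH x y
      rw [T.dist_comm (u := x)] at h3
      omega

lemma exists_extra {W : Type*} [Fintype W] {H : SimpleGraph W} (hc : H.Connected)
    (hcard : Nat.card {p : W × W // H.Adj p.1 p.2} ≤ 2 * Fintype.card W) :
    ∃ T ≤ H, T.IsTree ∧ (T = H ∨ ∃ u v, AtMostOne H T u v) := by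
  obtain ⟨T, hle, hT⟩ := hc.exists_isTree_le
  refine ⟨T, hle, hT, ?_⟩
  have h1 := hT.card_edgeFinset
  have h2 : Nat.card {p : W × W // H.Adj p.1 p.2} = 2 * H.edgeFinset.card := by
    rw [← SimpleGraph.sum_degrees_eq_twice_card_edges, Nat.card_eq_fintype_card,
      Fintype.card_subtype, Finset.card_filter, Fintype.sum_prod_type]
    refine Finset.sum_congr rfl fun a _ => ?_
    rw [← SimpleGraph.card_neighborFinset_eq_degree, SimpleGraph.neighborFinset_eq_filter,
      Finset.card_filter]
  have hsub : T.edgeFinset ⊆ H.edgeFinset := SimpleGraph.edgeFinset_mono hle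
  have h3 : (H.edgeFinset \ T.edgeFinset).card ≤ 1 := by
    rw [Finset.card_sdiff_of_subset hsub]; omega
  by_cases hTH : T = H
  · exact Or.inl hTH
  right
  have : ∃ u v, H.Adj u v ∧ ¬ T.Adj u v := by
    by_contra hcon
    push Not at hcon
    exact hTH (le_antisymm hle fun a b hab => hcon a b hab)
  obtain ⟨u, v, hu, hv⟩ := this
  refine ⟨u, v, hu, hv, fun a b hab => ?_⟩
  by_cases hTab : T.Adj a b
  · exact Or.inl hTab
  right
  have := Finset.card_le_one.1 h3 s(a, b) (by simp [hab, hTab]) s(u, v) (by simp [hu, hv])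
  simpa using this

lemma core {W : Type*} [Fintype W] {H : SimpleGraph W} (hc : H.Connected)
    (hcard : Nat.card {p : W × W // H.Adj p.1 p.2} ≤ 2 * Fintype.card W)
    (q : ℝ) (hq : 2 ≤ q) (x y : W) (D : ℕ) (hD : D ≤ H.dist x y) :
    ∃ h : W → ℝ, (∀ z, 0 ≤ h z) ∧
      (∀ z, (H.degree z : ℝ) = q + 1 →
        (q + 1) * (if z = y then 1 else 0) + ∑ a ∈ H.neighborFinset z, h a ≤ (q + 1) * h z) ∧
      h x ≤ 17 / 7 * (q / (q - 1)) * (q⁻¹) ^ D := by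
  obtain ⟨T, hle, hT, rfl | ⟨u, v, huv⟩⟩ := exists_extra hc hcard
  · exact core_tree hT q hq x y D hD
  · exact core_cycle hT hle huv q hq x y D hD

lemma walk_ball {V : Type*} (G : SimpleGraph V) (x : V) (R : ℕ) {z : V} (p : G.Walk z x)
    (hp : p.length ≤ R) (hx : x ∈ GFF.gball G x R) :
    ∃ hz : z ∈ GFF.gball G x R, (G.induce (GFF.gball G x R)).Reachable ⟨z, hz⟩ ⟨x, hx⟩ := by
  induction p with
  | nil => exact ⟨hx, SimpleGraph.Reachable.refl _⟩
  | @cons a b c hadj p ih =>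
    have hl : p.length + 1 ≤ R := by simpa using hp
    obtain ⟨hz, hr⟩ := ih (by omega) hx
    have ha : a ∈ GFF.gball G c R := by
      have := G.dist_le (SimpleGraph.Walk.cons hadj p)
      rw [SimpleGraph.dist_comm] at this
      exact this.trans hp
    refine ⟨ha, SimpleGraph.Reachable.trans (SimpleGraph.Adj.reachable ?_) hr⟩
    simpa using hadj

lemma green_sum_le {V : Type*} [Fintype V] (G : SimpleGraph V) (d : ℕ) (x y : V) (R : ℕ)
    (hc : G.Connected)
    (h : V → ℝ) (h0 : ∀ z, 0 ≤ h z)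
    (hs : ∀ z, G.dist x z + 1 ≤ R →
      (if z = y then 1 else 0) + ∑ w, GFF.transP G d z w * h w ≤ h z) :
    ∑ k ∈ Finset.range R, ((GFF.transP G d) ^ k) x y ≤ h x := by
  have key : ∀ k : ℕ, ∀ z, G.dist x z + k ≤ R →
      ∑ j ∈ Finset.range k, ((GFF.transP G d) ^ j) z y ≤ h z := by
    intro k
    induction k with
    | zero => intro z _; simpa using h0 z
    | succ k ih =>
      intro z hz
      refine le_trans ?_ (hs z (by omega))
      rw [Finset.sum_range_succ', pow_zero, Matrix.one_apply, add_comm]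
      gcongr
      have : ∀ j, ((GFF.transP G d) ^ (j + 1)) z y =
          ∑ w, GFF.transP G d z w * ((GFF.transP G d) ^ j) w y := by
        intro j; rw [pow_succ', Matrix.mul_apply]
      simp_rw [this]
      rw [Finset.sum_comm]
      refine Finset.sum_le_sum fun w _ => ?_
      rw [← Finset.mul_sum]
      by_cases hw : G.Adj z w
      · refine mul_le_mul_of_nonneg_left (ih w ?_) ?_
        · have h1 := hc.dist_triangle (u := x) (v := z) (w := w)
          have h2 := SimpleGraph.dist_eq_one_iff_adj.2 hw
          omega
        · simp only [GFF.transP, Matrix.of_apply, if_pos hw]; positivity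
      · simp [GFF.transP, hw]
  exact key R x (by simp)

lemma deg_eq {V : Type*} [Fintype V] (G : SimpleGraph V) (d : ℕ) (hreg : GFF.IsReg G d) (z : V) :
    (G.neighborFinset z).card = d := by
  rw [← hreg z, Nat.card_eq_fintype_card, SimpleGraph.card_neighborFinset_eq_degree,
    SimpleGraph.card_neighborSet_eq_degree]

lemma sum_transP {V : Type*} [Fintype V] (G : SimpleGraph V) (d : ℕ) (z : V) (f : V → ℝ) :
    ∑ w, GFF.transP G d z w * f w = (d : ℝ)⁻¹ * ∑ w ∈ G.neighborFinset z, f w := by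
  rw [SimpleGraph.neighborFinset_eq_filter, Finset.sum_filter, Finset.mul_sum]
  refine Finset.sum_congr rfl fun w _ => ?_
  by_cases hw : G.Adj z w <;> simp [GFF.transP, hw]

lemma local_green {V : Type*} [Fintype V] (G : SimpleGraph V) (d : ℕ) (hd : 3 ≤ d) (R : ℕ)
    (hc : G.Connected) (hreg : GFF.IsReg G d) (x y : V) (hy : G.dist x y ≤ R)
    (hcyc : GFF.adjPairs G (GFF.gball G x R) ≤ 2 * (GFF.gball G x R).ncard) :
    ∑ k ∈ Finset.range R, ((GFF.transP G d) ^ k) x y ≤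
      17 / 7 * (((d : ℝ) - 1) / ((d : ℝ) - 2)) * (((d : ℝ) - 1)⁻¹) ^ (G.dist x y) := by
  set B := GFF.gball G x R with hB
  have hx : x ∈ B := by simp [hB, GFF.gball]
  have hy : y ∈ B := hy
  set H := G.induce B with hH
  have hHadj : ∀ a b : B, H.Adj a b ↔ G.Adj a b := fun a b => by simp [hH]
  have hHc : H.Connected := by
    have : Nonempty B := ⟨⟨x, hx⟩⟩
    refine (SimpleGraph.connected_iff_exists_forall_reachable H).2 ⟨⟨x, hx⟩, fun z => ?_⟩
    obtain ⟨p, hp⟩ := hc.exists_walk_length_eq_dist z.1 x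
    obtain ⟨hz, hr⟩ := walk_ball G x R p (by
      rw [hp, SimpleGraph.dist_comm]; exact z.2) hx
    exact hr.symm
  have hcard : Nat.card {p : B × B // H.Adj p.1 p.2} ≤ 2 * Fintype.card B := by
    have e1 : Fintype.card B = B.ncard := by
      rw [← Nat.card_eq_fintype_card, Nat.card_coe_set_eq]
    rw [e1]
    refine le_trans ?_ hcyc
    rw [GFF.adjPairs, ← Nat.card_coe_set_eq]
    refine Nat.card_le_card_of_injective
      (fun p : {p : B × B // H.Adj p.1 p.2} =>
        (⟨(p.1.1.1, p.1.2.1), p.1.1.2, p.1.2.2, (hHadj _ _).1 p.2⟩ :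
          {p : V × V | p.1 ∈ B ∧ p.2 ∈ B ∧ G.Adj p.1 p.2})) ?_
    rintro ⟨⟨a, b⟩, h1⟩ ⟨⟨a', b'⟩, h2⟩ h
    simp only [Subtype.mk.injEq, Prod.mk.injEq] at h ⊢
    exact ⟨Subtype.ext h.1, Subtype.ext h.2⟩
  have hD : G.dist x y ≤ H.dist ⟨x, hx⟩ ⟨y, hy⟩ := by
    obtain ⟨p, hp⟩ := hHc.exists_walk_length_eq_dist ⟨x, hx⟩ ⟨y, hy⟩
    rw [← hp]
    have := G.dist_le (p.map (SimpleGraph.Embedding.induce B).toHom)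
    rw [SimpleGraph.Walk.length_map] at this
    exact this
  have hd3 : (3 : ℝ) ≤ d := by exact_mod_cast hd
  obtain ⟨h, h0, hs, hx'⟩ := core hHc hcard ((d : ℝ) - 1) (by linarith) ⟨x, hx⟩ ⟨y, hy⟩ _ hD
  have e2 : (d : ℝ) - 1 - 1 = d - 2 := by ring
  rw [e2] at hx'
  set h' : V → ℝ := fun z => if hz : z ∈ B then h ⟨z, hz⟩ else 0 with hh'
  have hh : ∀ z : B, h' z = h z := fun z => by simp [hh']
  have hx'' : h' x = h ⟨x, hx⟩ := hh ⟨x, hx⟩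
  rw [← hx''] at hx'
  refine le_trans (green_sum_le G d x y R hc h' ?_ ?_) hx'
  · intro z
    simp only [hh']
    split_ifs
    · exact h0 _
    · exact le_rfl
  · intro z hz
    have hzB : z ∈ B := by show G.dist x z ≤ R; omega
    have hN : ∀ w, G.Adj z w → w ∈ B := by
      intro w hw
      show G.dist x w ≤ R
      have h1 := hc.dist_triangle (u := x) (v := z) (w := w)
      have h2 := SimpleGraph.dist_eq_one_iff_adj.2 hw
      omega
    have hmap : G.neighborFinset z = (H.neighborFinset ⟨z, hzB⟩).map (Function.Embedding.subtype _) := by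
      ext w
      simp only [SimpleGraph.mem_neighborFinset, Finset.mem_map, Function.Embedding.coe_subtype]
      constructor
      · intro hw
        exact ⟨⟨w, hN w hw⟩, (hHadj _ _).2 hw, rfl⟩
      · rintro ⟨a, ha, rfl⟩
        exact (hHadj _ _).1 ha
    have hdeg : (H.degree ⟨z, hzB⟩ : ℝ) = (d : ℝ) - 1 + 1 := by
      rw [← SimpleGraph.card_neighborFinset_eq_degree]
      have := deg_eq G d hreg z
      rw [hmap, Finset.card_map] at this
      rw [this]; ring
    have := hs ⟨z, hzB⟩ hdeg
    rw [sum_transP, hmap, Finset.sum_map]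
    simp only [Function.Embedding.coe_subtype, hh]
    rw [show h' z = h ⟨z, hzB⟩ from hh ⟨z, hzB⟩]
    simp only [Subtype.mk.injEq, sub_add_cancel] at this
    have hdp : (0 : ℝ) < d := by linarith
    rw [← sub_nonneg] at this ⊢
    have h3 := mul_nonneg (inv_nonneg.2 hdp.le) this
    have e : ∀ a b c : ℝ, (d : ℝ)⁻¹ * (d * c - (d * a + b)) = c - (a + (d : ℝ)⁻¹ * b) := by
      intro a b c; field_simp
    rw [e] at h3
    exact h3

lemma hasSum_real_exp (x : ℝ) : HasSum (fun n : ℕ => x ^ n / (n.factorial : ℝ)) (Real.exp x) := by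
  rw [Real.exp_eq_exp_ℝ]
  exact NormedSpace.expSeries_div_hasSum_exp x

lemma spectral {V : Type*} [Fintype V] (P : Matrix V V ℝ) (hP : P.IsHermitian) :
    ∃ (u : V → V → ℝ) (μ : V → ℝ),
      (∀ x y, ∑ i, u i x * u i y = if x = y then 1 else 0) ∧
      (∀ i j, ∑ x, u i x * u j x = if i = j then 1 else 0) ∧
      (∀ i, P.mulVec (u i) = μ i • u i) := by
  refine ⟨fun i => (hP.eigenvectorBasis i).ofLp, hP.eigenvalues, ?_, ?_, ?_⟩
  · intro x y
    have h := hP.eigenvectorUnitary.2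
    have h1 := (Matrix.mem_unitaryGroup_iff.1 h)
    have h2 := congrFun (congrFun h1 x) y
    rw [Matrix.mul_apply, Matrix.one_apply] at h2
    rw [← h2]
    refine Finset.sum_congr rfl fun i _ => ?_
    rw [Matrix.star_apply]
    simp [Matrix.IsHermitian.eigenvectorUnitary_apply]
  · intro i j
    have h := hP.eigenvectorUnitary.2
    have h1 := (Matrix.mem_unitaryGroup_iff'.1 h)
    have h2 := congrFun (congrFun h1 i) j
    rw [Matrix.mul_apply, Matrix.one_apply] at h2
    rw [← h2]
    refine Finset.sum_congr rfl fun i _ => ?_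
    rw [Matrix.star_apply]
    simp [Matrix.IsHermitian.eigenvectorUnitary_apply]
  · intro i
    exact hP.mulVec_eigenvectorBasis i

lemma transP_herm {V : Type*} [Fintype V] (G : SimpleGraph V) (d : ℕ) :
    (GFF.transP G d).IsHermitian := by
  ext a b
  simp [GFF.transP, G.adj_comm]

lemma harmonic_const {V : Type*} [Fintype V] (G : SimpleGraph V) (d : ℕ) (hd : 3 ≤ d)
    (hc : G.Connected) (hreg : GFF.IsReg G d) (f : V → ℝ)
    (hf : (GFF.transP G d).mulVec f = f) (x y : V) : f x = f y := by
  have hdp : (d : ℝ) ≠ 0 := by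
    have : d ≠ 0 := by omega
    exact_mod_cast this
  have : (G.lapMatrix ℝ).mulVec f = 0 := by
    ext z
    rw [SimpleGraph.lapMatrix_mulVec_apply, ← SimpleGraph.card_neighborFinset_eq_degree,
      deg_eq G d hreg]
    have h := congrFun hf z
    have h' : ∑ w, GFF.transP G d z w * f w = f z := h
    rw [sum_transP] at h'
    rw [← h']
    simp only [Pi.zero_apply]
    field_simp
    ring
  exact (SimpleGraph.lapMatrix_mulVec_eq_zero_iff_forall_reachable G).1 this x y (hc x y)

lemma heat_gap {V : Type*} [Fintype V] (G : SimpleGraph V) (d : ℕ) (hd : 3 ≤ d)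
    (hc : G.Connected) (hreg : GFF.IsReg G d) (β : ℝ) (hgap : GFF.SpectralGapLB G d β)
    (Nn : ℕ) (hN : Nat.card V = Nn) (t : ℝ) (ht : 0 ≤ t) (x y : V) :
    GFF.heatK G d t x y - 1 / (Nn : ℝ) ≤ Real.exp (-(β * t)) := by
  obtain ⟨u, μ, hrow, hcol, hev⟩ := spectral _ (transP_herm G d)
  set P := GFF.transP G d with hPdef
  have hNV : (Fintype.card V : ℝ) = Nn := by rw [← hN, Nat.card_eq_fintype_card]
  have hne : Nonempty V := ⟨x⟩
  have hN0 : (0 : ℝ) < Nn := by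
    rw [← hNV]; exact_mod_cast Fintype.card_pos
  have hpow : ∀ (k : ℕ) (a : V), (P ^ k) a y = ∑ i, μ i ^ k * (u i a * u i y) := by
    intro k
    induction k with
    | zero => intro a; simp [hrow, Matrix.one_apply]
    | succ k ih =>
      intro a
      rw [pow_succ', Matrix.mul_apply]
      simp_rw [ih, Finset.mul_sum]
      rw [Finset.sum_comm]
      refine Finset.sum_congr rfl fun i _ => ?_
      have h : ∑ w, P a w * u i w = μ i * u i a := congrFun (hev i) a
      calc _ = (∑ w, P a w * u i w) * (μ i ^ k * u i y) := by
            rw [Finset.sum_mul]; refine Finset.sum_congr rfl fun w _ => by ring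
        _ = _ := by rw [h]; ring
  have hheat : GFF.heatK G d t x y = ∑ i, Real.exp (-(1 - μ i) * t) * (u i x * u i y) := by
    have h1 : HasSum (fun k : ℕ => ∑ i, Real.exp (-t) * (u i x * u i y) *
        ((t * μ i) ^ k / (k.factorial : ℝ)))
        (∑ i, Real.exp (-t) * (u i x * u i y) * Real.exp (t * μ i)) :=
      hasSum_sum fun i _ => (hasSum_real_exp _).mul_left _
    rw [GFF.heatK]
    refine Eq.trans ?_ (h1.tsum_eq.trans ?_)
    · refine tsum_congr fun k => ?_
      rw [hpow, Finset.mul_sum]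
      refine Finset.sum_congr rfl fun i _ => ?_
      rw [mul_pow]; ring
    · refine Finset.sum_congr rfl fun i _ => ?_
      rw [mul_right_comm, ← Real.exp_add]
      congr 2; ring
  have hconst : ∀ i, μ i = 1 → ∀ a b, u i a = u i b := by
    intro i hi a b
    refine harmonic_const G d hd hc hreg (u i) ?_ a b
    rw [hev, hi, one_smul]
  have hone : ∀ i, μ i = 1 → u i x * u i y = 1 / (Nn : ℝ) := by
    intro i hi
    have h := hcol i i
    have : ∀ a ∈ Finset.univ, u i a * u i a = u i x * u i y := by
      intro a _
      rw [hconst i hi a x, ← hconst i hi x y]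
    rw [Finset.sum_congr rfl this, Finset.sum_const, if_pos rfl, nsmul_eq_mul, Finset.card_univ,
      hNV] at h
    field_simp
    linarith
  have huniq : ∀ i j, μ i = 1 → μ j = 1 → i = j := by
    intro i j hi hj
    by_contra hij
    have h := hcol i j
    have : ∀ a ∈ Finset.univ, u i a * u j a = u i x * u j x := by
      intro a _
      rw [hconst i hi a x, hconst j hj a x]
    rw [Finset.sum_congr rfl this, Finset.sum_const, if_neg hij, nsmul_eq_mul, Finset.card_univ,
      hNV] at h
    have h1 := hone i hi
    have h2 := hone j hj
    have h3 : 0 < 1 / (Nn : ℝ) := by positivity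
    rcases mul_eq_zero.1 h with h | h
    · linarith
    · rcases mul_eq_zero.1 h with h | h
      · rw [h, zero_mul] at h1; linarith
      · rw [h, zero_mul] at h2; linarith
  rw [hheat, ← Finset.sum_filter_add_sum_filter_not Finset.univ (fun i => μ i = 1)]
  have hA : ∑ i ∈ Finset.univ.filter (fun i => μ i = 1),
      Real.exp (-(1 - μ i) * t) * (u i x * u i y) ≤ 1 / (Nn : ℝ) := by
    have : ∀ i ∈ Finset.univ.filter (fun i => μ i = 1),
      Real.exp (-(1 - μ i) * t) * (u i x * u i y) = 1 / (Nn : ℝ) := by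
      intro i hi
      have hi' : μ i = 1 := by simpa using hi
      rw [hone i hi', hi']; simp
    rw [Finset.sum_congr rfl this, Finset.sum_const, nsmul_eq_mul]
    have hcard : (Finset.univ.filter (fun i => μ i = 1)).card ≤ 1 := by
      rw [Finset.card_le_one]
      intro i hi j hj
      exact huniq i j (by simpa using hi) (by simpa using hj)
    have hcard' : ((Finset.univ.filter (fun i => μ i = 1)).card : ℝ) ≤ 1 := by exact_mod_cast hcard
    have h3 : 0 < 1 / (Nn : ℝ) := by positivity
    nlinarith
  have hB : ∑ i ∈ Finset.univ.filter (fun i => ¬ μ i = 1),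
      Real.exp (-(1 - μ i) * t) * (u i x * u i y) ≤ Real.exp (-(β * t)) := by
    calc _ ≤ ∑ i ∈ Finset.univ.filter (fun i => ¬ μ i = 1),
          Real.exp (-(β * t)) * ((u i x * u i x + u i y * u i y) / 2) := by
          refine Finset.sum_le_sum fun i hi => ?_
          have hi' : ¬ μ i = 1 := by simpa using hi
          have hnz : u i ≠ 0 := by
            intro h0
            have := hcol i i
            rw [h0] at this
            simp at this
          have hl := hgap (u i) (1 - μ i) (by
            rw [Matrix.sub_mulVec, Matrix.one_mulVec, ← hPdef, hev, sub_smul, one_smul]) hnz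
          have hl' : β ≤ 1 - μ i := by
            rcases hl with h | h
            · exact absurd (by linarith) hi'
            · exact h
          have he : Real.exp (-(1 - μ i) * t) ≤ Real.exp (-(β * t)) := by
            apply Real.exp_le_exp.2
            nlinarith
          have h1 : u i x * u i y ≤ (u i x * u i x + u i y * u i y) / 2 := by
            nlinarith [sq_nonneg (u i x - u i y)]
          have h2 : 0 ≤ (u i x * u i x + u i y * u i y) / 2 := by
            nlinarith [sq_nonneg (u i x), sq_nonneg (u i y)]
          calc _ ≤ Real.exp (-(1 - μ i) * t) * ((u i x * u i x + u i y * u i y) / 2) :=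
                mul_le_mul_of_nonneg_left h1 (Real.exp_pos _).le
            _ ≤ _ := mul_le_mul_of_nonneg_right he h2
      _ ≤ ∑ i, Real.exp (-(β * t)) * ((u i x * u i x + u i y * u i y) / 2) := by
          refine Finset.sum_le_sum_of_subset_of_nonneg (Finset.filter_subset _ _) fun i _ _ => ?_
          refine mul_nonneg (Real.exp_pos _).le ?_
          nlinarith [sq_nonneg (u i x), sq_nonneg (u i y)]
      _ = _ := by
          rw [← Finset.mul_sum, ← Finset.sum_div, Finset.sum_add_distrib, hrow, hrow]
          simp
  linarith

lemma transP_pow_bd {V : Type*} [Fintype V] (G : SimpleGraph V) (d : ℕ) (hd : 3 ≤ d)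
    (hreg : GFF.IsReg G d) (k : ℕ) (x y : V) :
    0 ≤ ((GFF.transP G d) ^ k) x y ∧ ((GFF.transP G d) ^ k) x y ≤ 1 := by
  have hdp : (0 : ℝ) < d := by
    have : 0 < d := by omega
    exact_mod_cast this
  induction k generalizing x with
  | zero => rw [pow_zero, Matrix.one_apply]; split_ifs <;> simp
  | succ k ih =>
    rw [pow_succ', Matrix.mul_apply, sum_transP]
    constructor
    · exact mul_nonneg (by positivity) (Finset.sum_nonneg fun w _ => (ih w).1)
    · have h : ∑ w ∈ G.neighborFinset x, ((GFF.transP G d) ^ k) w y ≤ d := by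
        refine (Finset.sum_le_sum fun w _ => (ih w).2).trans ?_
        rw [Finset.sum_const, deg_eq G d hreg]; simp
      calc _ ≤ (d : ℝ)⁻¹ * d := by gcongr
        _ = 1 := by field_simp

lemma heat_tail {V : Type*} [Fintype V] (G : SimpleGraph V) (d : ℕ) (hd : 3 ≤ d)
    (hreg : GFF.IsReg G d) (R : ℕ) (t : ℝ) (ht : 0 ≤ t) (x y : V) :
    GFF.heatK G d t x y ≤
      ∑ k ∈ Finset.range R, Real.exp (-t) * t ^ k / (Nat.factorial k) * ((GFF.transP G d) ^ k) x y +
      Real.exp (-(R : ℝ) + (Real.exp 1 - 1) * t) := by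
  set a : ℕ → ℝ := fun k =>
    Real.exp (-t) * t ^ k / (Nat.factorial k) * ((GFF.transP G d) ^ k) x y with ha
  have h1 : HasSum (fun k => if k ∈ Finset.range R then a k else 0) (∑ k ∈ Finset.range R, a k) := by
    have : HasSum (fun k => if k ∈ Finset.range R then a k else 0)
        (∑ k ∈ Finset.range R, if k ∈ Finset.range R then a k else 0) :=
      hasSum_sum_of_ne_finset_zero (fun b hb => if_neg hb)
    rwa [Finset.sum_congr rfl (fun k hk => if_pos hk)] at this
  have h2 : HasSum (fun k : ℕ => Real.exp (-(R : ℝ) - t) * ((t * Real.exp 1) ^ k / (k.factorial : ℝ)))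
      (Real.exp (-(R : ℝ) + (Real.exp 1 - 1) * t)) := by
    have := (hasSum_real_exp (t * Real.exp 1)).mul_left (Real.exp (-(R : ℝ) - t))
    rw [← Real.exp_add] at this
    have e : -(R : ℝ) + (Real.exp 1 - 1) * t = -(R : ℝ) - t + t * Real.exp 1 := by ring
    rw [e]; exact this
  have h3 := h1.add h2
  have hb : ∀ k, a k ≤ (if k ∈ Finset.range R then a k else 0) +
      Real.exp (-(R : ℝ) - t) * ((t * Real.exp 1) ^ k / (k.factorial : ℝ)) := by
    intro k
    by_cases hk : k ∈ Finset.range R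
    · rw [if_pos hk]
      have : 0 ≤ Real.exp (-(R : ℝ) - t) * ((t * Real.exp 1) ^ k / (k.factorial : ℝ)) := by positivity
      linarith
    · rw [if_neg hk, zero_add]
      have hkR : (R : ℝ) ≤ k := by
        have : R ≤ k := by simpa using hk
        exact_mod_cast this
      have e1 : Real.exp (-(R : ℝ) - t) * ((t * Real.exp 1) ^ k / (k.factorial : ℝ)) =
          Real.exp (-t) * t ^ k / (Nat.factorial k) * Real.exp (k - R) := by
        rw [mul_pow, ← Real.exp_nat_mul, mul_one, sub_eq_add_neg, Real.exp_add, Real.exp_sub,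
          Real.exp_neg (R : ℝ)]
        ring
      rw [e1]
      refine mul_le_mul_of_nonneg_left ?_ (by positivity)
      exact (transP_pow_bd G d hd hreg k x y).2.trans (Real.one_le_exp (by linarith))
  have h0 : ∀ k, 0 ≤ a k := fun k =>
    mul_nonneg (by positivity) (transP_pow_bd G d hd hreg k x y).1
  have hsum : Summable a := Summable.of_nonneg_of_le h0 hb h3.summable
  exact hasSum_le hb hsum.hasSum h3

lemma pois_int (k : ℕ) : IntegrableOn (fun t : ℝ => Real.exp (-t) * t ^ k / (Nat.factorial k)) (Ioi 0)
    ∧ ∫ t in Ioi (0 : ℝ), Real.exp (-t) * t ^ k / (Nat.factorial k) = 1 := by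
  have hk : (0 : ℝ) < (k : ℝ) + 1 := by positivity
  have h1 := Real.GammaIntegral_convergent hk
  have h2 := Real.Gamma_eq_integral hk
  simp only [add_sub_cancel_right, Real.rpow_natCast] at h1 h2
  refine ⟨h1.div_const _, ?_⟩
  rw [integral_div, ← h2, Real.Gamma_nat_eq_factorial]
  field_simp

lemma zGreen_le {V : Type*} [Fintype V] (G : SimpleGraph V) (d : ℕ) (hd : 3 ≤ d)
    (hc : G.Connected) (hreg : GFF.IsReg G d) (β : ℝ) (hβ : 0 < β) (hgap : GFF.SpectralGapLB G d β)
    (Nn : ℕ) (hN : Nat.card V = Nn) (x y : V) (R : ℕ) (s : ℝ) (hs : 0 ≤ s) :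
    GFF.zGreen G d Nn x y ≤ ∑ k ∈ Finset.range R, ((GFF.transP G d) ^ k) x y +
      s * Real.exp (-(R : ℝ) + (Real.exp 1 - 1) * s) + Real.exp (-(β * s)) / β := by
  have hP0 : ∀ k, 0 ≤ ((GFF.transP G d) ^ k) x y := fun k =>
    (transP_pow_bd G d hd hreg k x y).1
  by_cases hint : IntegrableOn (fun t => GFF.heatK G d t x y - 1 / (Nn : ℝ)) (Ioi 0)
  swap
  · rw [GFF.zGreen, integral_undef hint]
    have : 0 ≤ ∑ k ∈ Finset.range R, ((GFF.transP G d) ^ k) x y :=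
      Finset.sum_nonneg fun k _ => hP0 k
    positivity
  set C := Real.exp (-(R : ℝ) + (Real.exp 1 - 1) * s) with hC
  set f1 : ℝ → ℝ := fun t =>
    ∑ k ∈ Finset.range R, Real.exp (-t) * t ^ k / (Nat.factorial k) * ((GFF.transP G d) ^ k) x y
  set f2 : ℝ → ℝ := (Ioc 0 s).indicator (fun _ => C)
  set f3 : ℝ → ℝ := (Ioi s).indicator (fun t => Real.exp (-β * t))
  have i1 : IntegrableOn f1 (Ioi 0) :=
    integrable_finsetSum _ fun k _ => (pois_int k).1.mul_const _
  have i2 : Integrable f2 := by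
    refine (integrable_indicator_iff measurableSet_Ioc).2 ?_
    exact integrableOn_const (by simp)
  have i3 : Integrable f3 :=
    (integrable_indicator_iff measurableSet_Ioi).2 (exp_neg_integrableOn_Ioi s hβ)
  have v1 : ∫ t in Ioi (0 : ℝ), f1 t = ∑ k ∈ Finset.range R, ((GFF.transP G d) ^ k) x y := by
    rw [integral_finsetSum _ fun k _ => (pois_int k).1.mul_const _]
    refine Finset.sum_congr rfl fun k _ => ?_
    rw [integral_mul_const, (pois_int k).2, one_mul]
  have v2 : ∫ t in Ioi (0 : ℝ), f2 t = s * C := by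
    rw [setIntegral_indicator measurableSet_Ioc,
      Set.inter_eq_self_of_subset_right Ioc_subset_Ioi_self]
    simp [hs]
  have v3 : ∫ t in Ioi (0 : ℝ), f3 t = Real.exp (-(β * s)) / β := by
    rw [setIntegral_indicator measurableSet_Ioi,
      Set.inter_eq_self_of_subset_right (Ioi_subset_Ioi hs),
      integral_exp_mul_Ioi (by linarith)]
    rw [neg_mul, neg_div_neg_eq]
  have i12 : IntegrableOn (fun t => f1 t + f2 t) (Ioi 0) := i1.add i2.integrableOn
  rw [GFF.zGreen, ← v1, ← v2, ← v3, ← integral_add i1 i2.integrableOn,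
    ← integral_add i12 i3.integrableOn]
  refine setIntegral_mono_on hint (i12.add i3.integrableOn)
    measurableSet_Ioi fun t ht => ?_
  have ht : 0 < t := ht
  by_cases hts : t ≤ s
  · have e2 : f2 t = C := indicator_of_mem (show t ∈ Ioc 0 s from ⟨ht, hts⟩) _
    have e3 : f3 t = 0 := indicator_of_notMem (by simpa using hts) _
    show _ ≤ f1 t + f2 t + f3 t
    rw [e2, e3]
    have h := heat_tail G d hd hreg R t ht.le x y
    have h1 : Real.exp (-(R : ℝ) + (Real.exp 1 - 1) * t) ≤ C := by
      apply Real.exp_le_exp.2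
      have := Real.add_one_le_exp (1 : ℝ)
      nlinarith
    have h2 : (0 : ℝ) ≤ 1 / (Nn : ℝ) := by positivity
    have h3 : GFF.heatK G d t x y ≤ f1 t + Real.exp (-(R : ℝ) + (Real.exp 1 - 1) * t) := h
    linarith
  · have e2 : f2 t = 0 := indicator_of_notMem (fun h => hts h.2) _
    have e3 : f3 t = Real.exp (-β * t) := indicator_of_mem (show t ∈ Ioi s from not_le.1 hts) _
    show _ ≤ f1 t + f2 t + f3 t
    rw [e2, e3]
    have h := heat_gap G d hd hc hreg β hgap Nn hN t ht.le x y
    have h1 : 0 ≤ f1 t := Finset.sum_nonneg fun k _ => mul_nonneg (by positivity) (hP0 k)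
    rw [neg_mul]
    linarith

lemma numeric (β : ℝ) (hβ : 0 < β) : ∀ᶠ X : ℝ in atTop, 0 ≤ X ∧
    (2 / 3 * X) * Real.exp (-(2 / 3 * X)) ≤ 1 / (4 * Real.exp 1) ∧
    Real.exp (-(β * X / 3)) ≤ β / 4 := by
  have h1 : Tendsto (fun X : ℝ => 2 / 3 * X) atTop atTop :=
    tendsto_id.const_mul_atTop (by norm_num)
  have h2 := (Real.tendsto_pow_mul_exp_neg_atTop_nhds_zero 1).comp h1
  have h3 : Tendsto (fun X : ℝ => β / 3 * X) atTop atTop :=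
    tendsto_id.const_mul_atTop (by positivity)
  have h4 := (Real.tendsto_exp_neg_atTop_nhds_zero).comp h3
  have e2 := h2.eventually_le_const (show (0 : ℝ) < 1 / (4 * Real.exp 1) by positivity)
  have e4 := h4.eventually_le_const (show (0 : ℝ) < β / 4 by positivity)
  filter_upwards [e2, e4, eventually_ge_atTop 0] with X a b c
  refine ⟨c, by simpa using a, ?_⟩
  have : β * X / 3 = β / 3 * X := by ring
  rw [this]; exact b

lemma log_le (q : ℝ) (hq : 0 < q) : Real.exp 1 * Real.log q ≤ q := by
  have h := Real.add_one_le_exp (Real.log q - 1)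
  rw [Real.exp_sub, Real.exp_log hq] at h
  have : Real.log q ≤ q / Real.exp 1 := by linarith
  rw [le_div_iff₀ (Real.exp_pos 1)] at this
  linarith

end GreenAux

/-- Green function bound at logarithmic distances, for large `n`. -/
theorem green_function_upper_bound_close
    (d : ℕ) (hd : 3 ≤ d)
    (V : ℕ → Type) [∀ n, Fintype (V n)]
    (G : ∀ n, SimpleGraph (V n)) (N : ℕ → ℕ) (α β : ℝ)
    (hα : 0 < α ∧ α ≤ 1) (hβ : 0 < β ∧ β ≤ 2)
    (hNmono : StrictMono N) (hNpos : ∀ n, 1 ≤ N n)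
    (hcard : ∀ n, Nat.card (V n) = N n)
    (hconn : ∀ n, (G n).Connected)
    (hreg : ∀ n, GFF.IsReg (G n) d)
    (hcyc : ∀ n (x : V n),
      GFF.adjPairs (G n) (GFF.gball (G n) x ⌊α * Real.logb ((d : ℝ) - 1) (N n : ℝ)⌋₊) ≤
        2 * (GFF.gball (G n) x ⌊α * Real.logb ((d : ℝ) - 1) (N n : ℝ)⌋₊).ncard)
    (hgap : ∀ n, GFF.SpectralGapLB (G n) d β) :
    ∃ n₀ : ℕ, ∀ n ≥ n₀, ∀ x y : V n,
      ((G n).dist x y : ℝ) ≤ GFF.c0 d α β / 3 * Real.logb ((d : ℝ) - 1) (N n : ℝ) →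
      GFF.zGreen (G n) d (N n) x y ≤
        3 * (((d : ℝ) - 1) / ((d : ℝ) - 2)) * (((d : ℝ) - 1)⁻¹) ^ ((G n).dist x y) := by
  have hd3 : (3 : ℝ) ≤ d := by exact_mod_cast hd
  set q : ℝ := (d : ℝ) - 1 with hqdef
  have hq2 : 2 ≤ q := by simp only [hqdef]; linarith
  have hq0 : 0 < q := by linarith
  have hlq : 0 < Real.log q := Real.log_pos (by linarith)
  have hlim : Tendsto (fun n => α * Real.log (N n) / q) atTop atTop := by
    have h1 : Tendsto (fun n => Real.log (N n : ℝ)) atTop atTop :=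
      Real.tendsto_log_atTop.comp (tendsto_natCast_atTop_atTop.comp hNmono.tendsto_atTop)
    have h2 : Tendsto (fun n => (α / q) * Real.log (N n : ℝ)) atTop atTop :=
      h1.const_mul_atTop (div_pos hα.1 hq0)
    refine h2.congr fun n => by ring
  obtain ⟨n₀, hn₀⟩ := eventually_atTop.1 (hlim.eventually (GreenAux.numeric β hβ.1))
  refine ⟨n₀, fun n hn x y hxy => ?_⟩
  obtain ⟨hX0, hX1, hX2⟩ := hn₀ n hn
  set X := α * Real.log (N n) / q with hX
  set R := ⌊α * Real.logb q (N n : ℝ)⌋₊ with hR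
  set D := (G n).dist x y with hD
  have hlogb : Real.logb q (N n : ℝ) = Real.log (N n) / Real.log q := rfl
  have hlN : 0 ≤ Real.log (N n) := Real.log_nonneg (by exact_mod_cast hNpos n)
  have hDR : D ≤ R := by
    apply Nat.le_floor
    refine hxy.trans ?_
    have hb : 0 ≤ Real.logb q (N n : ℝ) := by rw [hlogb]; positivity
    apply mul_le_mul_of_nonneg_right _ hb
    rw [GFF.c0, ← hqdef, div_div, div_le_iff₀ (by positivity)]
    nlinarith [mul_pos hα.1 hq0, mul_le_mul_of_nonneg_left hβ.2 hα.1.le,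
      mul_le_mul_of_nonneg_left hq2 hα.1.le, hα.1]
  have hloc := GreenAux.local_green (G n) d hd R (hconn n) (hreg n) x y hDR (hcyc n x)
  have hz := GreenAux.zGreen_le (G n) d hd (hconn n) (hreg n) β hβ.1 (hgap n) (N n) (hcard n) x y R
    (2 / 3 * X) (by positivity)
  rw [← hqdef, ← hD] at hloc
  have hd2 : (d : ℝ) - 2 = q - 1 := by rw [hqdef]; ring
  rw [hd2] at hloc ⊢
  have hRX : Real.exp 1 * X - 1 ≤ R := by
    have h1 := (Nat.lt_floor_add_one (α * Real.logb q (N n : ℝ))).le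
    have h2 : Real.exp 1 * X ≤ α * Real.logb q (N n : ℝ) := by
      rw [hlogb, hX, ← mul_div_assoc, ← mul_div_assoc, div_le_div_iff₀ hq0 hlq]
      have h3 := GreenAux.log_le q hq0
      have h4 : 0 ≤ α * Real.log (N n) := mul_nonneg hα.1.le hlN
      nlinarith
    linarith
  have hqD : Real.exp (-(β * X / 3)) ≤ (q⁻¹) ^ D := by
    have e1 : (q⁻¹) ^ D = Real.exp (-(D * Real.log q)) := by
      rw [Real.exp_neg, Real.exp_nat_mul, Real.exp_log hq0, inv_pow]
    rw [e1]
    apply Real.exp_le_exp.2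
    have h1 := mul_le_mul_of_nonneg_right hxy hlq.le
    have h2 : GFF.c0 d α β / 3 * Real.logb q (N n : ℝ) * Real.log q = β * X / 3 := by
      rw [GFF.c0, ← hqdef, hlogb, hX]; field_simp
    rw [h2] at h1
    linarith
  have he2 : 2 ≤ Real.exp 1 := by
    have := Real.add_one_le_exp (1 : ℝ); linarith
  have err1 : 2 / 3 * X * Real.exp (-(R : ℝ) + (Real.exp 1 - 1) * (2 / 3 * X)) ≤
      1 / 4 * (q⁻¹) ^ D := by
    have h1 : Real.exp (-(R : ℝ) + (Real.exp 1 - 1) * (2 / 3 * X)) ≤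
        Real.exp (-(2 / 3 * X)) * Real.exp 1 * Real.exp (-(β * X / 3)) := by
      rw [← Real.exp_add, ← Real.exp_add]
      apply Real.exp_le_exp.2
      nlinarith [mul_nonneg hX0 (sub_nonneg.2 he2), mul_nonneg hX0 (sub_nonneg.2 hβ.2)]
    calc _ ≤ 2 / 3 * X * (Real.exp (-(2 / 3 * X)) * Real.exp 1 * Real.exp (-(β * X / 3))) := by
          gcongr
      _ = (2 / 3 * X * Real.exp (-(2 / 3 * X))) * (Real.exp 1 * Real.exp (-(β * X / 3))) := by ring
      _ ≤ 1 / (4 * Real.exp 1) * (Real.exp 1 * Real.exp (-(β * X / 3))) := by gcongr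
      _ = 1 / 4 * Real.exp (-(β * X / 3)) := by field_simp
      _ ≤ _ := by gcongr
  have err2 : Real.exp (-(β * (2 / 3 * X))) / β ≤ 1 / 4 * (q⁻¹) ^ D := by
    have e1 : Real.exp (-(β * (2 / 3 * X))) =
        Real.exp (-(β * X / 3)) * Real.exp (-(β * X / 3)) := by
      rw [← Real.exp_add]; congr 1; ring
    have hβ0 := hβ.1
    rw [e1, div_le_iff₀ hβ0]
    calc _ ≤ (β / 4) * (q⁻¹) ^ D := by gcongr
      _ = _ := by ring
  have hqq : 1 ≤ q / (q - 1) := by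
    rw [le_div_iff₀ (by linarith)]; linarith
  have hp : 0 < (q⁻¹) ^ D := by positivity
  have hfin := mul_le_mul_of_nonneg_right hqq hp.le
  have e3 : 17 / 7 * (q / (q - 1)) * (q⁻¹) ^ D = 17 / 7 * (q / (q - 1) * (q⁻¹) ^ D) := by ring
  have e4 : 3 * (q / (q - 1)) * (q⁻¹) ^ D = 3 * (q / (q - 1) * (q⁻¹) ^ D) := by ring
  rw [e3] at hloc
  rw [e4]
  linarith
end

section
/- Let x be a vertex of G_n and R ≥ 0 be such that the ball B_{G_n}(x,R) contains a unique cycle, of length ℓ, and let y ∈ B_{G_n}(x,R). Then: (i) no z ∈ π_{n,x}^{-1}({y}) ∩ B_{T_d}(o,R) satisfies d_{T_d}(o,z) < d_{G_n}(x,y); (ii) for every k ≥ 0, the set {z ∈ π_{n,x}^{-1}({y}) ∩ B_{T_d}(o,R) : d_{T_d}(o,z) ∈ [k, k+ℓ)} has at most 2 elements. Equivalently, for every k ≥ 0 there are at most 2 non-backtracking paths from x to y inside B_{G_n}(x,R) whose length lies in [k, k+ℓ). -/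
open MeasureTheory ProbabilityTheory Filter Set
open scoped ENNReal NNReal ENat Classical

namespace CT
open SimpleGraph

variable {V : Type*} {T : Type*}

lemma path_eq {F : SimpleGraph V} (hF : F.IsAcyclic) {u v : V} {p q : F.Walk u v}
    (hp : p.IsPath) (hq : q.IsPath) : p = q :=
  congrArg Subtype.val ((hF.subsingleton_path u v).elim ⟨p, hp⟩ ⟨q, hq⟩)

lemma path_len {F : SimpleGraph V} (hF : F.IsAcyclic) {u v : V} {p : F.Walk u v}
    (hp : p.IsPath) : p.length = F.dist u v := by
  obtain ⟨q, hq, hl⟩ := (Walk.reachable p).exists_path_of_dist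
  rw [path_eq hF hp hq, hl]

lemma dist_split {F : SimpleGraph V} (hF : F.IsAcyclic) {a b u : V} {q : F.Walk a b}
    (hq : q.IsPath) (hu : u ∈ q.support) : F.dist a b = F.dist a u + F.dist u b := by
  obtain ⟨q1, q2, h1, h2, h⟩ := hq.mem_support_iff_exists_append.1 hu
  rw [← path_len hF hq, ← path_len hF h1, ← path_len hF h2, h, Walk.length_append]

lemma path_append {F : SimpleGraph V} {x u a : V} {p : F.Walk x u} {q : F.Walk u a}
    (hp : p.IsPath) (hq : q.IsPath) (h : ∀ w ∈ p.support, w ∈ q.support → w = u) :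
    (p.append q).IsPath := by
  rw [Walk.isPath_def, Walk.support_append, List.nodup_append]
  have hq' := hq.support_nodup
  rw [← Walk.cons_tail_support] at hq'
  refine ⟨hp.support_nodup, (List.nodup_cons.1 hq').2, ?_⟩
  rintro w hw w' hw' rfl
  have := h w hw (List.mem_of_mem_tail hw')
  subst this
  exact (List.nodup_cons.1 hq').1 hw'

lemma median {F : SimpleGraph V} (hF : F.IsAcyclic) {a b x : V} {q : F.Walk a b}
    (hq : q.IsPath) (hx : F.Reachable x a) :
    ∃ u ∈ q.support, F.dist x a = F.dist x u + F.dist u a ∧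
      F.dist x b = F.dist x u + F.dist u b := by
  obtain ⟨p, hp⟩ := hx.exists_isPath
  obtain ⟨u, hu, hup, h⟩ := Walk.exists_mem_support_forall_mem_support_imp_eq (p := p)
    q.support.toFinset ⟨a, by simp⟩
  have hu' : u ∈ q.support := by simpa using hu
  obtain ⟨q1, q2, h1, h2, hqq⟩ := hq.mem_support_iff_exists_append.1 hu'
  have hpt := hp.takeUntil hup
  refine ⟨u, hu', ?_, ?_⟩
  · have := path_append hpt h1.reverse (fun w hw hw' => h w
      (by simp only [List.mem_toFinset]; rw [hqq]; simp at hw'; simp [hw']) hw)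
    rw [← path_len hF this, ← path_len hF hpt, ← path_len hF h1.reverse, Walk.length_append]
  · have := path_append hpt h2 (fun w hw hw' => h w
      (by simp only [List.mem_toFinset]; rw [hqq]; simp [hw']) hw)
    rw [← path_len hF this, ← path_len hF hpt, ← path_len hF h2, Walk.length_append]

lemma tri {F : SimpleGraph V} {u v w : V} (h1 : F.Reachable u v) (h2 : F.Reachable v w) :
    F.dist u w ≤ F.dist u v + F.dist v w := by
  obtain ⟨p, hp⟩ := h1.exists_walk_length_eq_dist
  obtain ⟨q, hq⟩ := h2.exists_walk_length_eq_dist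
  rw [← hp, ← hq, ← Walk.length_append]
  exact dist_le _

lemma four {F : SimpleGraph V} (hF : F.IsAcyclic) {a b x y : V} {q : F.Walk a b}
    (hq : q.IsPath) (hx : F.Reachable x a) (hy : F.Reachable y a) :
    F.dist x y + F.dist a b ≤ F.dist x a + F.dist b y ∨
    F.dist x y + F.dist a b ≤ F.dist x b + F.dist a y := by
  obtain ⟨u, hu, hu1, hu2⟩ := median hF hq hx
  obtain ⟨v, hv, hv1, hv2⟩ := median hF hq hy
  have su := dist_split hF hq hu
  have sv := dist_split hF hq hv
  have ru : F.Reachable a u := ⟨q.takeUntil u hu⟩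
  have rv : F.Reachable a v := ⟨q.takeUntil v hv⟩
  have t1 := tri (hx.trans ru) (ru.symm.trans hy.symm)
  have t2 := tri (ru.symm.trans rv) (rv.symm.trans hy.symm)
  obtain ⟨q1, q2, h1, h2, hqq⟩ := hq.mem_support_iff_exists_append.1 hv
  rw [F.dist_comm (u := b) (v := y), F.dist_comm (u := a) (v := y)]
  rw [F.dist_comm (u := v) (v := y)] at t2
  rw [F.dist_comm (u := u) (v := a)] at hu1
  rw [F.dist_comm (u := v) (v := a)] at hv1
  rw [hqq, Walk.mem_support_append_iff] at hu
  rcases hu with hu | hu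
  · have := dist_split hF h1 hu
    right; omega
  · have := dist_split hF h2 hu
    rw [F.dist_comm (u := v) (v := u)] at this
    left; omega

def iter {H : SimpleGraph V} {b : V} (c : H.Walk b b) : ℕ → H.Walk b b
  | 0 => Walk.nil
  | n + 1 => c.append (iter c n)

lemma iter_len {H : SimpleGraph V} {b : V} (c : H.Walk b b) (n : ℕ) :
    (iter c n).length = n * c.length := by
  induction n with
  | zero => simp [iter]
  | succ n ih => simp [iter, ih]; ring

/-- class of walks that stay in `F`. -/
def P0 {F H : SimpleGraph V} (hFH : F ≤ H) {x y : V} (w : H.Walk x y) : Prop :=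
  ∃ p : F.Walk x y, p.IsPath ∧ w = p.mapLe hFH

/-- class of walks crossing `a → b`. -/
def PA {F H : SimpleGraph V} (hFH : F ≤ H) {a b : V} (hab : H.Adj a b) (Q : F.Walk b a)
    {x y : V} (w : H.Walk x y) : Prop :=
  ∃ (m : ℕ) (p : F.Walk x a) (r : F.Walk b y), p.IsPath ∧ r.IsPath ∧
    w = (p.mapLe hFH).append (Walk.cons hab
      ((iter ((Q.mapLe hFH).append (Walk.cons hab Walk.nil)) m).append (r.mapLe hFH)))

lemma cross {F H : SimpleGraph V} (hFH : F ≤ H) (hF : F.IsAcyclic) {a b y : V}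
    (hab : H.Adj a b) (Q : F.Walk b a) (hQ : Q.IsPath) (w : H.Walk b y)
    (hc : List.IsChain (· ≠ ·) (Walk.cons hab w).edges)
    (hw : P0 hFH w ∨ PA hFH hab Q w ∨ PA hFH hab.symm Q.reverse w) :
    PA hFH hab Q (Walk.cons hab w) := by
  rcases hw with ⟨p, hp, rfl⟩ | ⟨m, p, r, hp, hr, rfl⟩ | ⟨m, p, r, hp, hr, rfl⟩
  · exact ⟨0, Walk.nil, p, Walk.IsPath.nil, hp, by simp [iter]⟩
  · refine ⟨m + 1, Walk.nil, r, Walk.IsPath.nil, hr, ?_⟩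
    rw [path_eq hF hp hQ]
    simp only [iter, ← Walk.append_assoc, Walk.cons_append, Walk.nil_append, Walk.map_nil]
  · exfalso
    have : p = Walk.nil := path_eq hF hp Walk.IsPath.nil
    subst this
    simp [Sym2.eq_swap] at hc

lemma struct {F H : SimpleGraph V} (hFH : F ≤ H) (hF : F.IsAcyclic) {a b : V}
    (hab : H.Adj a b) (hH : ∀ u v, H.Adj u v → F.Adj u v ∨ s(u, v) = s(a, b))
    (Q : F.Walk b a) (hQ : Q.IsPath) {x y : V} (w : H.Walk x y)
    (hc : List.IsChain (· ≠ ·) w.edges) :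
    P0 hFH w ∨ PA hFH hab Q w ∨ PA hFH hab.symm Q.reverse w := by
  induction w with
  | nil => exact Or.inl ⟨Walk.nil, Walk.IsPath.nil, by simp⟩
  | @cons x x' y h w ih =>
    have hw := ih (by rw [Walk.edges_cons] at hc; exact hc.tail)
    rcases hH _ _ h with h' | h'
    · rcases hw with ⟨p, hp, rfl⟩ | ⟨m, p, r, hp, hr, rfl⟩ | ⟨m, p, r, hp, hr, rfl⟩
      · refine Or.inl ⟨Walk.cons h' p, ?_, by simp⟩
        rw [hF.isPath_iff_isChain]
        simpa using hc
      · refine Or.inr (Or.inl ⟨m, Walk.cons h' p, r, ?_, hr, by simp⟩)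
        rw [hF.isPath_iff_isChain]
        rw [← Walk.cons_append, Walk.edges_append] at hc
        simpa using hc.left_of_append
      · refine Or.inr (Or.inr ⟨m, Walk.cons h' p, r, ?_, hr, by simp⟩)
        rw [hF.isPath_iff_isChain]
        rw [← Walk.cons_append, Walk.edges_append] at hc
        simpa using hc.left_of_append
    · rw [Sym2.eq_iff] at h'
      rcases h' with ⟨rfl, rfl⟩ | ⟨rfl, rfl⟩
      · exact Or.inr (Or.inl (cross hFH hF h Q hQ w hc hw))
      · refine Or.inr (Or.inr (cross hFH hF h Q.reverse hQ.reverse w hc ?_))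
        rw [Walk.reverse_reverse]
        tauto

lemma PA_len {F H : SimpleGraph V} {hFH : F ≤ H} (hF : F.IsAcyclic) {a b : V} {hab : H.Adj a b}
    {Q : F.Walk b a} {x y : V} {w : H.Walk x y} (h : PA hFH hab Q w) :
    F.Reachable x a ∧ F.Reachable b y ∧ ∃ m : ℕ,
      w.length = F.dist x a + F.dist b y + 1 + m * (Q.length + 1) := by
  obtain ⟨m, p, r, hp, hr, rfl⟩ := h
  refine ⟨⟨p⟩, ⟨r⟩, m, ?_⟩
  rw [← path_len hF hp, ← path_len hF hr]
  simp [iter_len]; ring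

lemma PA_uniq {F H : SimpleGraph V} {hFH : F ≤ H} (hF : F.IsAcyclic) {a b : V} {hab : H.Adj a b}
    {Q : F.Walk b a} {x y : V} {w w' : H.Walk x y} (h : PA hFH hab Q w) (h' : PA hFH hab Q w')
    (k : ℕ) (h1 : k ≤ w.length) (h2 : k ≤ w'.length) (h3 : w.length < k + (Q.length + 1))
    (h4 : w'.length < k + (Q.length + 1)) : w = w' := by
  obtain ⟨m, p, r, hp, hr, rfl⟩ := h
  obtain ⟨m', p', r', hp', hr', rfl⟩ := h'
  obtain rfl := path_eq hF hp hp'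
  obtain rfl := path_eq hF hr hr'
  simp [iter_len] at h1 h2 h3 h4
  have : m = m' := by
    rcases lt_trichotomy m m' with h | h | h
    · have := Nat.mul_le_mul_right (Q.length + 1) (Nat.succ_le_of_lt h)
      rw [Nat.succ_mul] at this
      omega
    · exact h
    · have := Nat.mul_le_mul_right (Q.length + 1) (Nat.succ_le_of_lt h)
      rw [Nat.succ_mul] at this
      omega
  rw [this]

lemma noThree {F H : SimpleGraph V} {hFH : F ≤ H} (hF : F.IsAcyclic) {a b : V} {hab : H.Adj a b}
    {Q : F.Walk b a} (hQ : Q.IsPath) {x y : V} {w0 w1 w2 : H.Walk x y}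
    (h0 : P0 hFH w0) (h1 : PA hFH hab Q w1) (h2 : PA hFH hab.symm Q.reverse w2)
    (k : ℕ) (hk : k ≤ w0.length) (hk1 : w1.length < k + (Q.length + 1))
    (hk2 : w2.length < k + (Q.length + 1)) : False := by
  obtain ⟨p, hp, rfl⟩ := h0
  obtain ⟨r1, r2, m, hm⟩ := PA_len hF h1
  obtain ⟨r3, r4, m', hm'⟩ := PA_len hF h2
  have hl : (p.mapLe hFH).length = F.dist x y := by
    rw [← path_len hF hp]; simp
  have hq := path_len hF hQ.reverse
  rw [Walk.length_reverse] at hq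
  have := four hF hQ.reverse r1 r4.symm
  rcases this with h | h <;> nlinarith [Nat.zero_le (m * (Q.length+1)),
    Nat.zero_le (m' * (Q.reverse.length+1))]

lemma lift_uniq {Gt : SimpleGraph T} {π : T → V}
    (hinj : ∀ t, InjOn π (Gt.neighborSet t)) {o z : T} (p : Gt.Walk o z) :
    ∀ {z'} (p' : Gt.Walk o z'), p.support.map π = p'.support.map π → z = z' := by
  induction p with
  | nil =>
    intro z' p' h
    cases p' with
    | nil => rfl
    | cons h' q => simp at h
  | @cons u v w h p ih =>
    intro z' p' hs
    cases p' with
    | nil => simp at hs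
    | @cons _ v' _ h' q =>
      simp only [Walk.support_cons, List.map_cons, List.cons.injEq, true_and] at hs
      have : v = v' := by
        apply hinj u h h'
        have := congrArg List.head? hs
        rw [← Walk.cons_tail_support p, ← Walk.cons_tail_support q, List.map_cons, List.map_cons,
          List.head?_cons, List.head?_cons] at this
        exact Option.some.inj this
      subst this
      exact ih q hs

lemma map_chain {Gt : SimpleGraph T} {G : SimpleGraph V} (f : Gt →g G)
    (hinj : ∀ t, InjOn f (Gt.neighborSet t)) {o z : T} (p : Gt.Walk o z)
    (hp : List.IsChain (· ≠ ·) p.edges) : List.IsChain (· ≠ ·) (p.map f).edges := by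
  induction p with
  | nil => simp
  | @cons u v w h p ih =>
    have ih' := ih (by rw [Walk.edges_cons] at hp; exact hp.tail)
    cases p with
    | nil => simp
    | @cons _ v' _ h' q =>
      simp only [Walk.edges_cons, Walk.map_cons, List.isChain_cons_cons] at hp ih' ⊢
      refine ⟨fun he => hp.1 ?_, ih'⟩
      rw [Sym2.eq_iff] at he
      rcases he with ⟨he, -⟩ | ⟨he, -⟩
      · exact absurd he (f.map_adj h).ne
      · have : u = v' := hinj v h.symm h' he
        subst this
        exact Sym2.eq_swap

end CT

/-- counting preimages under the cover tree of a ball with a unique cycle. -/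
theorem cover_tree_preimage_count
    (d : ℕ) (hd : 3 ≤ d)
    (V : Type) [Fintype V]
    (G : SimpleGraph V) (hconn : G.Connected) (hreg : GFF.IsReg G d)
    (T : Type) (Gt : SimpleGraph T) (o : T) (htree : GFF.IsRegTree Gt d)
    (x : V) (π : T → V) (hπ : GFF.IsCoverMap Gt G o x π)
    (R ℓ : ℕ)
    (hcyc : ∃ (v : V) (c : G.Walk v v), c.IsCycle ∧
      (∀ u ∈ c.support, u ∈ GFF.gball G x R) ∧ c.length = ℓ ∧
      ∀ (v' : V) (c' : G.Walk v' v'), c'.IsCycle →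
        (∀ u ∈ c'.support, u ∈ GFF.gball G x R) → ∀ e, e ∈ c'.edges ↔ e ∈ c.edges)
    (y : V) (hy : y ∈ GFF.gball G x R) :
    (∀ z : T, π z = y → z ∈ GFF.gball Gt o R → G.dist x y ≤ Gt.dist o z) ∧
    (∀ k : ℕ,
      {z : T | π z = y ∧ z ∈ GFF.gball Gt o R ∧
          k ≤ Gt.dist o z ∧ Gt.dist o z < k + ℓ}.ncard ≤ 2) := by
  obtain ⟨hTc, hTa, hTr⟩ := htree
  obtain ⟨hπo, -, hπn⟩ := hπ
  have hinj : ∀ t, InjOn π (Gt.neighborSet t) := by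
    intro t
    have h1 : (Gt.neighborSet t).ncard = d := hTr t
    have h2 : (G.neighborSet (π t)).ncard = d := hreg (π t)
    apply Set.injOn_of_ncard_image_eq
    · rw [hπn, h1, h2]
    · exact Set.finite_of_ncard_ne_zero (by omega)
  let f : Gt →g G := ⟨π, fun {s t} h => by
    have : π t ∈ π '' (Gt.neighborSet s) := ⟨t, h, rfl⟩
    rw [hπn] at this
    exact this⟩
  have hf : ∀ t, f t = π t := fun _ => rfl
  subst hπo
  have part1 : ∀ z : T, G.dist (π o) (π z) ≤ Gt.dist o z := by
    intro z
    obtain ⟨p, hp⟩ := hTc.exists_walk_length_eq_dist o z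
    have := SimpleGraph.dist_le (p.map f)
    rw [SimpleGraph.Walk.length_map, hp] at this
    exact this
  refine ⟨fun z hz _ => hz ▸ part1 z, fun k => ?_⟩
  obtain ⟨v, c, hc, hcb, hcl, huniq⟩ := hcyc
  cases c with
  | nil => simp at hc
  | @cons _ b _ hab q =>
    rw [SimpleGraph.Walk.cons_isCycle_iff] at hc
    obtain ⟨hqp, hqe⟩ := hc
    have hab' : v ∈ GFF.gball G (π o) R ∧ b ∈ GFF.gball G (π o) R :=
      ⟨hcb v (by simp), hcb b (by simp)⟩
    let H : SimpleGraph V :=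
      { Adj := fun u w => G.Adj u w ∧ u ∈ GFF.gball G (π o) R ∧ w ∈ GFF.gball G (π o) R
        symm := ⟨fun u w h => ⟨h.1.symm, h.2.2, h.2.1⟩⟩
        loopless := ⟨fun u h => h.1.ne rfl⟩ }
    let F : SimpleGraph V :=
      { Adj := fun u w => H.Adj u w ∧ s(u, w) ≠ s(v, b)
        symm := ⟨fun u w h => ⟨h.1.symm, by rw [Sym2.eq_swap]; exact h.2⟩⟩
        loopless := ⟨fun u h => h.1.ne rfl⟩ }
    have hFH : F ≤ H := fun u w h => h.1
    have hHG : H ≤ G := fun u w h => h.1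
    have hF : F.IsAcyclic := by
      intro u c' hc'
      have h1 : (c'.mapLe (hFH.trans hHG)).IsCycle := hc'.mapLe _
      have h2 := huniq u _ h1 (by
        intro t ht
        rw [SimpleGraph.Walk.support_mapLe_eq_support] at ht
        rw [SimpleGraph.Walk.mem_support_iff_exists_mem_edges_of_not_nil hc'.not_nil] at ht
        obtain ⟨e, he, hte⟩ := ht
        have he' := c'.edges_subset_edgeSet he
        induction e with
        | _ e1 e2 =>
        have he'' : F.Adj e1 e2 := he'
        rw [Sym2.mem_iff] at hte
        rcases hte with rfl | rfl
        · exact he''.1.2.1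
        · exact he''.1.2.2) s(v, b)
      rw [SimpleGraph.Walk.edges_mapLe_eq_edges] at h2
      have h3 := c'.edges_subset_edgeSet (h2.2 (by simp))
      have h4 : F.Adj v b := h3
      exact h4.2 rfl
    have habH : H.Adj v b := ⟨hab, hab'⟩
    have hH : ∀ u w, H.Adj u w → F.Adj u w ∨ s(u, w) = s(v, b) := by
      intro u w h
      by_cases he : s(u, w) = s(v, b)
      · exact Or.inr he
      · exact Or.inl ⟨h, he⟩
    have hqF : ∀ e ∈ q.edges, e ∈ F.edgeSet := by
      intro e he
      induction e with
      | _ e1 e2 =>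
      show F.Adj e1 e2
      refine ⟨⟨q.adj_of_mem_edges he, hcb _ ?_, hcb _ ?_⟩, fun h => hqe (h ▸ he)⟩
      · simp [q.fst_mem_support_of_mem_edges he]
      · simp [q.snd_mem_support_of_mem_edges he]
    obtain ⟨Q, hQ, hQl⟩ : ∃ Q : F.Walk b v, Q.IsPath ∧ Q.length = q.length :=
      ⟨q.transfer F hqF, hqp.transfer hqF, by simp⟩
    have hl : ℓ = Q.length + 1 := by rw [← hcl, hQl]; simp
    have key : ∀ z, π z = y ∧ z ∈ GFF.gball Gt o R ∧ k ≤ Gt.dist o z ∧ Gt.dist o z < k + ℓ →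
        ∃ (p : Gt.Walk o z) (w : H.Walk (π o) y), w.support = p.support.map π ∧
          k ≤ w.length ∧ w.length < k + (Q.length + 1) ∧
          (CT.P0 hFH w ∨ CT.PA hFH habH Q w ∨ CT.PA hFH habH.symm Q.reverse w) := by
      rintro z ⟨rfl, hzR, hk1, hk2⟩
      obtain ⟨p, hp, hpl⟩ := hTc.exists_path_of_dist o z
      have hball : ∀ t ∈ p.support, π t ∈ GFF.gball G (π o) R := by
        intro t ht
        have h1 := part1 t
        have h2 := SimpleGraph.dist_le (p.takeUntil t ht)
        have h3 := p.length_takeUntil_le_length ht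
        have h4 : Gt.dist o z ≤ R := hzR
        show G.dist (π o) (π t) ≤ R
        omega
      have hpe : ∀ e ∈ (p.map f).edges, e ∈ H.edgeSet := by
        intro e he
        rw [SimpleGraph.Walk.edges_map, List.mem_map] at he
        obtain ⟨e', he', rfl⟩ := he
        induction e' with
        | _ e1 e2 =>
        show H.Adj (π e1) (π e2)
        exact ⟨f.map_adj (p.adj_of_mem_edges he'), hball _ (p.fst_mem_support_of_mem_edges he'),
          hball _ (p.snd_mem_support_of_mem_edges he')⟩
      have hch := CT.map_chain f hinj p ((hTa.isPath_iff_isChain p).1 hp)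
      have hwl : ((p.map f).transfer H hpe).length = Gt.dist o z := by simp [hpl]
      have hws : ((p.map f).transfer H hpe).support = p.support.map π := by
        rw [SimpleGraph.Walk.support_transfer, SimpleGraph.Walk.support_map]; rfl
      refine ⟨p, (p.map f).transfer H hpe, hws, ?_, ?_, ?_⟩
      · rw [hwl]; exact hk1
      · rw [hwl, ← hl]; exact hk2
      · refine CT.struct hFH hF habH hH Q hQ ((p.map f).transfer H hpe) ?_
        rw [SimpleGraph.Walk.edges_transfer]
        exact hch
    by_contra hcon
    push Not at hcon
    rw [Set.two_lt_ncard_iff (Set.finite_of_ncard_ne_zero (by omega))] at hcon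
    obtain ⟨z1, z2, z3, hz1, hz2, hz3, h12, h13, h23⟩ := hcon
    obtain ⟨p1, w1, s1, k1, l1, c1⟩ := key z1 hz1
    obtain ⟨p2, w2, s2, k2, l2, c2⟩ := key z2 hz2
    obtain ⟨p3, w3, s3, k3, l3, c3⟩ := key z3 hz3
    have n12 : w1 ≠ w2 := fun h => h12 (CT.lift_uniq hinj p1 p2 (by rw [← s1, ← s2, h]))
    have n13 : w1 ≠ w3 := fun h => h13 (CT.lift_uniq hinj p1 p3 (by rw [← s1, ← s3, h]))
    have n23 : w2 ≠ w3 := fun h => h23 (CT.lift_uniq hinj p2 p3 (by rw [← s2, ← s3, h]))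
    have u0 : ∀ w w' : H.Walk (π o) y, CT.P0 hFH w → CT.P0 hFH w' → w = w' := by
      rintro w w' ⟨p, hp, rfl⟩ ⟨p', hp', rfl⟩
      rw [CT.path_eq hF hp hp']
    have uA : ∀ w w' : H.Walk (π o) y, k ≤ w.length → k ≤ w'.length →
        w.length < k + (Q.length + 1) → w'.length < k + (Q.length + 1) →
        CT.PA hFH habH Q w → CT.PA hFH habH Q w' → w = w' :=
      fun w w' a1 a2 a3 a4 h h' => CT.PA_uniq hF h h' k a1 a2 a3 a4
    have uB : ∀ w w' : H.Walk (π o) y, k ≤ w.length → k ≤ w'.length →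
        w.length < k + (Q.length + 1) → w'.length < k + (Q.length + 1) →
        CT.PA hFH habH.symm Q.reverse w → CT.PA hFH habH.symm Q.reverse w' → w = w' :=
      fun w w' a1 a2 a3 a4 h h' => CT.PA_uniq hF h h' k a1 a2
        (by rw [SimpleGraph.Walk.length_reverse]; exact a3)
        (by rw [SimpleGraph.Walk.length_reverse]; exact a4)
    have n3 : ∀ w w' w'' : H.Walk (π o) y, k ≤ w.length →
        w'.length < k + (Q.length + 1) → w''.length < k + (Q.length + 1) →
        CT.P0 hFH w → CT.PA hFH habH Q w' → CT.PA hFH habH.symm Q.reverse w'' → False :=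
      fun w w' w'' a1 a2 a3 h h' h'' => CT.noThree hF hQ h h' h'' k a1 a2 a3
    rcases c1 with c1 | c1 | c1 <;> rcases c2 with c2 | c2 | c2 <;>
      rcases c3 with c3 | c3 | c3 <;>
    first
    | exact n12 (u0 _ _ c1 c2)
    | exact n13 (u0 _ _ c1 c3)
    | exact n23 (u0 _ _ c2 c3)
    | exact n12 (uA _ _ k1 k2 l1 l2 c1 c2)
    | exact n13 (uA _ _ k1 k3 l1 l3 c1 c3)
    | exact n23 (uA _ _ k2 k3 l2 l3 c2 c3)
    | exact n12 (uB _ _ k1 k2 l1 l2 c1 c2)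
    | exact n13 (uB _ _ k1 k3 l1 l3 c1 c3)
    | exact n23 (uB _ _ k2 k3 l2 l3 c2 c3)
    | exact n3 _ _ _ k1 l2 l3 c1 c2 c3
    | exact n3 _ _ _ k1 l3 l2 c1 c3 c2
    | exact n3 _ _ _ k2 l1 l3 c2 c1 c3
    | exact n3 _ _ _ k2 l3 l1 c2 c3 c1
    | exact n3 _ _ _ k3 l1 l2 c3 c1 c2
    | exact n3 _ _ _ k3 l2 l1 c3 c2 c1
end

section
/- Let R ≥ 0. For the discrete-time simple random walk (X_k)_{k≥0} on the d-regular tree T_d, for all y ∈ B_{T_d}(o,R) and all z ∈ S_{T_d}(o,R), the hitting distribution of the sphere satisfies P_y[ X_{H_{S_{T_d}(o,R)}} = z ] ≤ (1/(d−1))^{R − d_{T_d}(y,o)}, where H_U denotes the entrance time of the walk into the set U. -/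
open MeasureTheory ProbabilityTheory Filter Set
open scoped ENNReal NNReal ENat Classical

namespace GFF

lemma aux_countable {T : Type} (G : SimpleGraph T) (hc : G.Connected) (o : T)
    (hf : ∀ v, (G.neighborSet v).Finite) : Countable T := by
  have h : ∀ n : ℕ, {v : T | ∃ p : G.Walk v o, p.length = n}.Countable := by
    intro n
    induction n with
    | zero =>
      refine (Set.countable_singleton o).mono ?_
      rintro v ⟨p, hp⟩
      exact SimpleGraph.Walk.eq_of_length_eq_zero hp
    | succ n ih =>
      refine (ih.biUnion (fun u _ => (hf u).countable)).mono ?_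
      rintro v ⟨p, hp⟩
      cases p with
      | nil => simp at hp
      | cons h p =>
        simp only [SimpleGraph.Walk.length_cons, Nat.add_right_cancel_iff] at hp
        simp only [Set.mem_iUnion]
        exact ⟨_, ⟨p, hp⟩, h.symm⟩
  rw [← Set.countable_univ_iff]
  refine (Set.countable_iUnion h).mono ?_
  intro v _
  obtain ⟨p⟩ := hc.preconnected v o
  exact Set.mem_iUnion.2 ⟨p.length, p, rfl⟩

lemma aux_unique {T : Type} (G : SimpleGraph T) (hc : G.Connected) (ha : G.IsAcyclic)
    {x u v z : T} (hu : G.Adj x u) (hv : G.Adj x v)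
    (hdu : G.dist x z = G.dist u z + 1) (hdv : G.dist x z = G.dist v z + 1) : u = v := by
  obtain ⟨p, hp⟩ := hc.exists_walk_length_eq_dist u z
  obtain ⟨q, hq⟩ := hc.exists_walk_length_eq_dist v z
  have h1 : (SimpleGraph.Walk.cons hu p).IsPath :=
    SimpleGraph.Walk.isPath_of_length_eq_dist _ (by simp [hp, hdu])
  have h2 : (SimpleGraph.Walk.cons hv q).IsPath :=
    SimpleGraph.Walk.isPath_of_length_eq_dist _ (by simp [hq, hdv])
  have h3 := ha.path_unique ⟨_, h1⟩ ⟨_, h2⟩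
  have h4 := congrArg (fun w : G.Path x z => w.1.snd) h3
  simpa using h4

lemma aux_super {T : Type} (G : SimpleGraph T) (e : ℕ) (he : 2 ≤ e)
    (hT : IsRegTree G (e + 1)) (x z : T) (hxz : x ≠ z) :
    ∑' u, srwStep G (e + 1) x u * ((e : ℝ≥0∞)⁻¹) ^ G.dist u z
      ≤ ((e : ℝ≥0∞)⁻¹) ^ G.dist x z := by
  obtain ⟨hc, ha, hr⟩ := hT
  have hfin : (G.neighborSet x).Finite := by
    apply Set.finite_of_ncard_ne_zero
    have := hr x
    rw [Nat.card_coe_set_eq] at this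
    omega
  have hcard : hfin.toFinset.card = e + 1 := by
    rw [← Set.ncard_eq_toFinset_card _ hfin, ← Nat.card_coe_set_eq, hr x]
  obtain ⟨c, hcx, hcd⟩ : ∃ c, G.Adj x c ∧ G.dist x z = G.dist c z + 1 := by
    obtain ⟨p, hp⟩ := hc.exists_walk_length_eq_dist x z
    cases p with
    | nil => exact absurd rfl hxz
    | @cons _ c _ h p =>
      refine ⟨c, h, ?_⟩
      have h1 := SimpleGraph.dist_le p
      have h2 := hc.dist_triangle (u := x) (v := c) (w := z)
      rw [SimpleGraph.dist_eq_one_iff_adj.2 h] at h2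
      simp only [SimpleGraph.Walk.length_cons] at hp
      omega
  set q : ℝ≥0∞ := (e : ℝ≥0∞)⁻¹ with hq
  have heq : (e : ℝ≥0∞) * q = 1 := ENNReal.mul_inv_cancel (by simp; omega) (by simp)
  have hdd : (((e + 1 : ℕ)) : ℝ≥0∞)⁻¹ * (e + 1 : ℕ) = 1 :=
    ENNReal.inv_mul_cancel (by simp) (by simp)
  have hoth : ∀ u ∈ hfin.toFinset.erase c,
      srwStep G (e + 1) x u * q ^ G.dist u z = (((e + 1 : ℕ)) : ℝ≥0∞)⁻¹ * q ^ (G.dist c z + 2) := by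
    intro u hu
    simp only [Finset.mem_erase, Set.Finite.mem_toFinset, SimpleGraph.mem_neighborSet] at hu
    have hne : G.dist x z ≠ G.dist u z + 1 := fun h =>
      hu.1 (aux_unique G hc ha hu.2 hcx h hcd)
    have := SimpleGraph.IsTree.dist_eq_dist_add_one_of_adj ⟨hc, ha⟩ z hu.2
    rw [SimpleGraph.dist_comm (u := z), SimpleGraph.dist_comm (u := z)] at this
    have h3 : G.dist u z = G.dist c z + 2 := by omega
    rw [h3, srwStep, if_pos hu.2]
  rw [tsum_eq_sum (s := hfin.toFinset)]
  · rw [← Finset.add_sum_erase _ _ (show c ∈ hfin.toFinset by simpa using hcx),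
      Finset.sum_congr rfl hoth, Finset.sum_const, Finset.card_erase_of_mem (by simpa using hcx),
      hcard, srwStep, if_pos hcx, hcd, nsmul_eq_mul]
    set D := (((e + 1 : ℕ)) : ℝ≥0∞)⁻¹
    set m := G.dist c z
    apply le_of_eq
    have h1 : q ^ m = (e : ℝ≥0∞) * q ^ (m + 1) := by
      rw [pow_succ, mul_left_comm, heq, mul_one]
    have h2 : (e : ℝ≥0∞) * q ^ (m + 2) = q ^ (m + 1) := by
      rw [pow_succ q (m + 1), mul_left_comm, heq, mul_one]
    calc D * q ^ m + ((e + 1 - 1 : ℕ) : ℝ≥0∞) * (D * q ^ (m + 2))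
        = D * q ^ m + D * ((e : ℝ≥0∞) * q ^ (m + 2)) := by
          rw [Nat.add_sub_cancel]; ring
      _ = D * (e + 1 : ℕ) * q ^ (m + 1) := by
          rw [h2, h1]; push_cast; ring
      _ = q ^ (m + 1) := by rw [hdd, one_mul]
  · intro u hu
    simp only [Set.Finite.mem_toFinset, SimpleGraph.mem_neighborSet] at hu
    simp [srwStep, hu]

lemma aux_hit {T : Type} [MeasurableSpace T] [Countable T] (G : SimpleGraph T) (d : ℕ)
    (W : T → Measure (ℕ → T)) (hW : IsSRW G d W) (y z : T) (g : T → ℝ≥0∞) (hg : g z = 1)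
    (hs : ∀ x, x ≠ z → ∑' u, srwStep G d x u * g u ≤ g x) (n : ℕ) :
    ∀ (k : ℕ) (p : ℕ → T),
      W y {ω | (∀ i ≤ k, ω i = p i) ∧ ∃ i, k ≤ i ∧ i ≤ k + n ∧ ω i = z} ≤
        W y {ω | ∀ i ≤ k, ω i = p i} * g (p k) := by
  induction n with
  | zero =>
    intro k p
    by_cases h : p k = z
    · rw [h, hg, mul_one]
      exact measure_mono fun ω hω => hω.1
    · refine le_of_eq_of_le ?_ (zero_le)
      convert measure_empty (μ := W y)
      ext ω
      simp only [Set.mem_setOf_eq, Set.mem_empty_iff_false, iff_false]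
      rintro ⟨h1, i, h2, h3, h4⟩
      have : i = k := by omega
      subst this
      exact h ((h1 i le_rfl).symm.trans h4)
  | succ n ih =>
    intro k p
    by_cases h : p k = z
    · rw [h, hg, mul_one]
      exact measure_mono fun ω hω => hω.1
    · let P : T → ℕ → T := fun u => Function.update p (k + 1) u
      have hP : ∀ u, ∀ i ≤ k, P u i = p i := fun u i hi =>
        Function.update_of_ne (by omega) _ _
      have hP' : ∀ u, P u (k + 1) = u := fun u => Function.update_self _ _ _
      have hsub : {ω : ℕ → T | (∀ i ≤ k, ω i = p i) ∧ ∃ i, k ≤ i ∧ i ≤ k + (n + 1) ∧ ω i = z} ⊆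
          ⋃ u, {ω | (∀ i ≤ k + 1, ω i = P u i) ∧ ∃ i, k + 1 ≤ i ∧ i ≤ k + 1 + n ∧ ω i = z} := by
        rintro ω ⟨h1, i, h2, h3, h4⟩
        refine Set.mem_iUnion.2 ⟨ω (k + 1), ?_, i, ?_, by omega, h4⟩
        · intro j hj
          rcases Nat.lt_or_ge k j with h5 | h5
          · have : j = k + 1 := by omega
            rw [this, hP']
          · rw [hP _ j h5, h1 j h5]
        · have : i ≠ k := by
            rintro rfl
            exact h ((h1 i le_rfl).symm.trans h4)
          omega
      have hcyl : ∀ u, W y {ω | ∀ i ≤ k + 1, ω i = P u i} =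
          W y {ω | ∀ i ≤ k, ω i = p i} * srwStep G d (p k) u := by
        intro u
        rw [hW.2, hW.2, Finset.prod_range_succ, hP', hP u k le_rfl, hP u 0 (by omega), mul_assoc]
        congr 2
        refine Finset.prod_congr rfl fun i hi => ?_
        have := Finset.mem_range.1 hi
        rw [hP u i (by omega), hP u (i + 1) (by omega)]
      calc _ ≤ _ := measure_mono hsub
        _ ≤ _ := measure_iUnion_le _
        _ ≤ ∑' u, W y {ω | ∀ i ≤ k, ω i = p i} * (srwStep G d (p k) u * g u) := by
          refine ENNReal.tsum_le_tsum fun u => (ih (k + 1) (P u)).trans_eq ?_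
          rw [hcyl, hP', mul_assoc]
        _ = W y {ω | ∀ i ≤ k, ω i = p i} * ∑' u, (srwStep G d (p k) u * g u) := ENNReal.tsum_mul_left
        _ ≤ _ := by gcongr; exact hs _ h

lemma aux_hit_all {T : Type} [MeasurableSpace T] [Countable T] (G : SimpleGraph T) (d : ℕ)
    (W : T → Measure (ℕ → T)) (hW : IsSRW G d W) (y z : T) (g : T → ℝ≥0∞) (hg : g z = 1)
    (hs : ∀ x, x ≠ z → ∑' u, srwStep G d x u * g u ≤ g x) :
    W y {ω | ∃ i, ω i = z} ≤ g y := by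
  have := hW.1 y
  have h0 : W y {ω | ∀ i ≤ 0, ω i = y} = 1 := by
    have := hW.2 y 0 (fun _ => y)
    simpa using this
  have hnull : ∀ x, x ≠ y → W y {ω | ω 0 = x} = 0 := by
    intro x hx
    have := hW.2 y 0 (fun _ => x)
    simpa [hx] using this
  have hn : W y {ω | ω 0 ≠ y} = 0 := by
    have : {ω : ℕ → T | ω 0 ≠ y} ⊆ ⋃ x : {x : T // x ≠ y}, {ω | ω 0 = x.1} := by
      intro ω hω
      exact Set.mem_iUnion.2 ⟨⟨ω 0, hω⟩, rfl⟩
    refine measure_mono_null this (measure_iUnion_null fun x => hnull x.1 x.2)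
  let E : ℕ → Set (ℕ → T) := fun n => {ω | (∀ i ≤ 0, ω i = y) ∧ ∃ i, 0 ≤ i ∧ i ≤ 0 + n ∧ ω i = z}
  have hE : Monotone E := by
    rintro a b hab ω ⟨h1, i, h2, h3, h4⟩
    exact ⟨h1, i, h2, by omega, h4⟩
  have hEn : ∀ n, W y (E n) ≤ g y := by
    intro n
    have := aux_hit G d W hW y z g hg hs n 0 (fun _ => y)
    rwa [h0, one_mul] at this
  have hsub : {ω : ℕ → T | ∃ i, ω i = z} ⊆ {ω | ω 0 ≠ y} ∪ ⋃ n, E n := by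
    rintro ω ⟨i, hi⟩
    by_cases h : ω 0 = y
    · refine Or.inr (Set.mem_iUnion.2 ⟨i, ?_, i, by omega, by omega, hi⟩)
      intro j hj
      have : j = 0 := by omega
      rw [this, h]
    · exact Or.inl h
  calc _ ≤ _ := measure_mono hsub
    _ ≤ W y {ω | ω 0 ≠ y} + W y (⋃ n, E n) := measure_union_le _ _
    _ = W y (⋃ n, E n) := by rw [hn, zero_add]
    _ = ⨆ n, W y (E n) := hE.measure_iUnion
    _ ≤ _ := iSup_le hEn

end GFF

/-- hitting distribution of a sphere by SRW on the `d`-regular tree. -/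
theorem tree_sphere_hitting_bound
    (d : ℕ) (hd : 3 ≤ d)
    (T : Type) [MeasurableSpace T]
    (Gt : SimpleGraph T) (o : T) (htree : GFF.IsRegTree Gt d)
    (W : T → Measure (ℕ → T)) (hW : GFF.IsSRW Gt d W)
    (R : ℕ) (y : T) (hy : y ∈ GFF.gball Gt o R) (z : T) (hz : Gt.dist o z = R) :
    W y {ω | GFF.hitTime {u : T | Gt.dist o u = R} ω ≠ ⊤ ∧
        GFF.stopAt {u : T | Gt.dist o u = R} ω = z} ≤
      ENNReal.ofReal ((((d : ℝ) - 1)⁻¹) ^ ((R : ℤ) - (Gt.dist y o : ℤ))) := by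
  obtain ⟨e, rfl⟩ : ∃ e, d = e + 1 := ⟨d - 1, by omega⟩
  have he : 2 ≤ e := by omega
  have hcount : Countable T := by
    refine GFF.aux_countable Gt htree.1 o fun v => ?_
    apply Set.finite_of_ncard_ne_zero
    have := htree.2.2 v
    rw [Nat.card_coe_set_eq] at this
    omega
  have key := GFF.aux_hit_all Gt (e + 1) W hW y z (fun x => ((e : ℝ≥0∞)⁻¹) ^ Gt.dist x z)
    (by simp) (fun x hx => GFF.aux_super Gt e he htree x z hx)
  have hyR : Gt.dist y o ≤ R := by rw [SimpleGraph.dist_comm]; exact hy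
  have htri := htree.1.dist_triangle (u := o) (v := y) (w := z)
  rw [SimpleGraph.dist_comm (u := o) (v := y), hz] at htri
  obtain ⟨m, hm⟩ := Nat.exists_eq_add_of_le hyR
  have hexp : (R : ℤ) - (Gt.dist y o : ℤ) = (m : ℤ) := by omega
  have he0 : (0 : ℝ) < e := by exact_mod_cast (by omega : 0 < e)
  have hval : ENNReal.ofReal (((((e + 1 : ℕ) : ℝ) - 1)⁻¹) ^ ((R : ℤ) - (Gt.dist y o : ℤ))) =
      ((e : ℝ≥0∞)⁻¹) ^ m := by
    rw [hexp, zpow_natCast]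
    push_cast
    rw [add_sub_cancel_right, ENNReal.ofReal_pow (by positivity), ENNReal.ofReal_inv_of_pos he0,
      ENNReal.ofReal_natCast]
  rw [hval]
  calc _ ≤ W y {ω | ∃ i, ω i = z} := measure_mono fun ω hω => ⟨_, hω.2⟩
    _ ≤ _ := key
    _ ≤ _ := pow_le_pow_right_of_le_one' (by simp; omega) (by omega)
end
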